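/- arXiv:2409.16026 — 6 statements merged into one kernel-verified Lean document; each statement's English description precedes it below -/
import Mathlib

section
/- For every real number z with |z| < 1, one has Σ_{n=1}^∞ (2z)^{2n} / (C(2n,n) · n) = 2z·arcsin(z) / √(1-z²), where C(2n,n) is the central binomial coefficient. -/
open Set

/-- The coefficients `4 ^ n / C(2n, n)` of the derivative of `arcsin z / √(1 - z ^ 2)`. -/
noncomputable def invCentralBinomCoeff (n : ℕ) : ℝ := 4 ^ n / (Nat.centralBinom n : ℝ)

lemma centralBinom_cast_pos (n : ℕ) : 0 < (Nat.centralBinom n : ℝ) :=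
  Nat.cast_pos.mpr (Nat.centralBinom_pos n)

lemma centralBinom_succ_cast (n : ℕ) :
    ((n : ℝ) + 1) * (Nat.centralBinom (n + 1) : ℝ) = 2 * (2 * n + 1) * Nat.centralBinom n := by
  exact_mod_cast Nat.succ_mul_centralBinom_succ n

lemma invCentralBinomCoeff_nonneg (n : ℕ) : 0 ≤ invCentralBinomCoeff n := by
  unfold invCentralBinomCoeff
  positivity

lemma invCentralBinomCoeff_le (n : ℕ) : invCentralBinomCoeff n ≤ 2 * n + 1 := by
  rw [invCentralBinomCoeff, div_le_iff₀ (centralBinom_cast_pos n)]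
  exact_mod_cast Nat.four_pow_le_two_mul_add_one_mul_central_binom n

lemma invCentralBinomCoeff_succ_sub (n : ℕ) :
    invCentralBinomCoeff (n + 1) - invCentralBinomCoeff n =
      invCentralBinomCoeff n / (2 * n + 1) := by
  have h₁ := centralBinom_cast_pos n
  have h₂ := centralBinom_cast_pos (n + 1)
  have h₃ := centralBinom_succ_cast n
  have h₄ : (0 : ℝ) < 2 * n + 1 := by positivity
  unfold invCentralBinomCoeff
  rw [pow_succ]
  field_simp
  linear_combination (-2) * h₃

lemma summable_two_mul_add_one_mul_pow {r : ℝ} (hr : |r| < 1) :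
    Summable fun n : ℕ => (2 * (n : ℝ) + 1) * r ^ (2 * n) := by
  have hs : ‖r ^ 2‖ < 1 := by
    rw [Real.norm_eq_abs, abs_pow]
    exact pow_lt_one₀ (abs_nonneg r) hr two_ne_zero
  have h₁ := (summable_pow_mul_geometric_of_norm_lt_one 1 hs).mul_left 2
  have h₀ := summable_geometric_of_norm_lt_one hs
  refine (h₁.add h₀).congr fun n => ?_
  rw [pow_mul]
  ring

lemma norm_invCentralBinomCoeff_mul_pow_le {x r : ℝ} (hx : |x| ≤ r) (n : ℕ) :
    ‖invCentralBinomCoeff n * x ^ (2 * n)‖ ≤ (2 * n + 1) * r ^ (2 * n) := by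
  rw [norm_mul, norm_pow, Real.norm_eq_abs, Real.norm_eq_abs,
    abs_of_nonneg (invCentralBinomCoeff_nonneg n)]
  gcongr
  exact invCentralBinomCoeff_le n

lemma summable_invCentralBinomCoeff_mul_pow {x : ℝ} (hx : |x| < 1) :
    Summable fun n : ℕ => invCentralBinomCoeff n * x ^ (2 * n) :=
  .of_norm_bounded (summable_two_mul_add_one_mul_pow (by rwa [abs_abs]))
    (norm_invCentralBinomCoeff_mul_pow_le le_rfl)

/-- The odd power series whose sum is `arcsin z / √(1 - z ^ 2)`. -/
noncomputable def arcsinDivSqrtSeries (z : ℝ) : ℝ :=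
  ∑' n : ℕ, invCentralBinomCoeff n / (2 * n + 1) * z ^ (2 * n + 1)

lemma arcsinDivSqrtSeries_zero : arcsinDivSqrtSeries 0 = 0 := by
  simp [arcsinDivSqrtSeries]

lemma hasDerivAt_arcsinDivSqrtSeries {z : ℝ} (hz : |z| < 1) :
    HasDerivAt arcsinDivSqrtSeries (∑' n : ℕ, invCentralBinomCoeff n * z ^ (2 * n)) z := by
  obtain ⟨r, hzr, hr⟩ := exists_between hz
  have hr₀ : 0 < r := (abs_nonneg z).trans_lt hzr
  refine hasDerivAt_tsum_of_isPreconnected (t := Ioo (-r) r) (y₀ := 0)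
    (summable_two_mul_add_one_mul_pow (by rwa [abs_of_pos hr₀])) isOpen_Ioo isPreconnected_Ioo
    (fun n y _ => ?_)
    (fun n y hy => norm_invCentralBinomCoeff_mul_pow_le (abs_lt.mpr hy).le n)
    ⟨neg_lt_zero.mpr hr₀, hr₀⟩ (by simp [summable_zero]) (abs_lt.mp hzr)
  have h₀ : (2 * (n : ℝ) + 1) ≠ 0 := by positivity
  refine ((hasDerivAt_pow (2 * n + 1) y).const_mul
    (invCentralBinomCoeff n / (2 * n + 1))).congr_deriv ?_
  push_cast
  field_simp

lemma one_sub_sq_mul_tsum_invCentralBinomCoeff {z : ℝ} (hz : |z| < 1) :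
    (1 - z ^ 2) * ∑' n : ℕ, invCentralBinomCoeff n * z ^ (2 * n) =
      1 + z * arcsinDivSqrtSeries z := by
  have hs := summable_invCentralBinomCoeff_mul_pow hz
  have hs' := (summable_nat_add_iff 1).mpr hs
  have hsub : (∑' n : ℕ, invCentralBinomCoeff (n + 1) * z ^ (2 * (n + 1))) -
      z ^ 2 * ∑' n : ℕ, invCentralBinomCoeff n * z ^ (2 * n) = z * arcsinDivSqrtSeries z := by
    rw [arcsinDivSqrtSeries, ← tsum_mul_left, ← tsum_mul_left, ← hs'.tsum_sub (hs.mul_left _)]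
    refine tsum_congr fun n => ?_
    rw [← invCentralBinomCoeff_succ_sub]
    ring
  have h₀ : invCentralBinomCoeff 0 = 1 := by simp [invCentralBinomCoeff]
  have hsplit := hs.tsum_eq_zero_add
  rw [h₀, mul_zero, pow_zero, mul_one] at hsplit
  linear_combination hsplit + hsub

lemma hasDerivAt_sqrt_mul_arcsinDivSqrtSeries {z : ℝ} (hz : |z| < 1) :
    HasDerivAt (fun x => √(1 - x ^ 2) * arcsinDivSqrtSeries x) (1 / √(1 - z ^ 2)) z := by
  have hpos : 0 < 1 - z ^ 2 := sub_pos.mpr ((sq_lt_one_iff_abs_lt_one z).mpr hz)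
  have hsqrt : HasDerivAt (fun x : ℝ => √(1 - x ^ 2)) (-(2 * z) / (2 * √(1 - z ^ 2))) z := by
    simpa using ((hasDerivAt_pow 2 z).const_sub 1).sqrt hpos.ne'
  refine (hsqrt.mul (hasDerivAt_arcsinDivSqrtSeries hz)).congr_deriv ?_
  have hode := one_sub_sq_mul_tsum_invCentralBinomCoeff hz
  have hne : √(1 - z ^ 2) ≠ 0 := (Real.sqrt_pos.mpr hpos).ne'
  field_simp
  rw [Real.sq_sqrt hpos.le]
  linear_combination hode

theorem sqrt_mul_arcsinDivSqrtSeries {z : ℝ} (hz : |z| < 1) :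
    √(1 - z ^ 2) * arcsinDivSqrtSeries z = Real.arcsin z := by
  have hd (x : ℝ) (hx : x ∈ Ioo (-1 : ℝ) 1) :
      HasDerivAt (fun x => √(1 - x ^ 2) * arcsinDivSqrtSeries x) (1 / √(1 - x ^ 2)) x :=
    hasDerivAt_sqrt_mul_arcsinDivSqrtSeries (abs_lt.mpr hx)
  have ha (x : ℝ) (hx : x ∈ Ioo (-1 : ℝ) 1) :
      HasDerivAt Real.arcsin (1 / √(1 - x ^ 2)) x :=
    Real.hasDerivAt_arcsin hx.1.ne' hx.2.ne
  exact isOpen_Ioo.eqOn_of_deriv_eq isPreconnected_Ioo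
    (fun x hx => (hd x hx).differentiableAt.differentiableWithinAt)
    (fun x hx => (ha x hx).differentiableAt.differentiableWithinAt)
    (fun x hx => (hd x hx).deriv.trans (ha x hx).deriv.symm)
    (show (0 : ℝ) ∈ Ioo (-1 : ℝ) 1 by norm_num)
    (by simp [arcsinDivSqrtSeries_zero]) (abs_lt.mp hz)

/-- **Lehmer's arcsine series.**
For every real `z` with `|z| < 1`,
`∑_{n=1}^∞ (2z)^{2n} / (C(2n,n) n) = 2 z arcsin z / √(1-z²)`. -/
theorem lehmer_arcsin_series (z : ℝ) (hz : |z| < 1) :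
    ∑' n : ℕ, (2 * z) ^ (2 * (n + 1)) / ((Nat.centralBinom (n + 1) : ℝ) * ((n : ℝ) + 1)) =
      2 * z * Real.arcsin z / Real.sqrt (1 - z ^ 2) := by
  have hpos : 0 < 1 - z ^ 2 := sub_pos.mpr ((sq_lt_one_iff_abs_lt_one z).mpr hz)
  have hne : √(1 - z ^ 2) ≠ 0 := (Real.sqrt_pos.mpr hpos).ne'
  rw [← sqrt_mul_arcsinDivSqrtSeries hz, mul_left_comm, mul_div_cancel_left₀ _ hne,
    arcsinDivSqrtSeries, ← tsum_mul_left]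
  refine tsum_congr fun n => ?_
  have h₁ := (centralBinom_cast_pos n).ne'
  have h₂ : (2 * (n : ℝ) + 1) ≠ 0 := by positivity
  rw [mul_comm (Nat.centralBinom (n + 1) : ℝ), centralBinom_succ_cast, invCentralBinomCoeff,
    mul_pow, pow_mul 2 2]
  norm_num only
  field_simp
  ring
end

section
/- For every integer k ≥ 0 and every real number z with |z| < 1, Σ_{n=1}^∞ (2n)^{k-1}(2z)^{2n} / C(2n,n) = z/(1-z²)^{k+1/2} · ( z·√(1-z²)·p_{k-1}(z²) + arcsin(z)·q_{k-1}(z²) ). -/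
open Polynomial

/-- Lehmer's polynomials `q_k(x)` for `k ≥ -1`, shifted so that `lehmerQ n = q_{n-1}`:
`q_{-1}(x) = 1` and `q_{k+1}(x) = (2(k+1)x+1) q_k(x) + 2x(1-x) q_k'(x)`. -/
noncomputable def lehmerQ : ℕ → Polynomial ℝ
  | 0 => 1
  | n + 1 => (C (2 * (n : ℝ)) * X + 1) * lehmerQ n + (2 * X * (1 - X)) * derivative (lehmerQ n)

/-- Lehmer's polynomials `p_k(x)` for `k ≥ -1`, shifted so that `lehmerP n = p_{n-1}`:
`p_{-1}(x) = 0` and `p_{k+1}(x) = 2(kx+1) p_k(x) + 2x(1-x) p_k'(x) + q_k(x)`. -/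
noncomputable def lehmerP : ℕ → Polynomial ℝ
  | 0 => 0
  | n + 1 => C 2 * (C ((n : ℝ) - 1) * X + 1) * lehmerP n
      + (2 * X * (1 - X)) * derivative (lehmerP n) + lehmerQ n

/-- The coefficient of `z ^ (2 * n + 2)` in `∑_{m ≥ 1} (2m)^{k-1} (2z)^{2m} / C(2m,m)`. -/
noncomputable def lehmerCoeff (k n : ℕ) : ℝ :=
  (2 * ((n : ℝ) + 1)) ^ ((k : ℤ) - 1) * 4 ^ (n + 1) / (Nat.centralBinom (n + 1) : ℝ)

lemma lehmerCoeff_succ (k n : ℕ) :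
    lehmerCoeff (k + 1) n = lehmerCoeff k n * (2 * ((n : ℝ) + 1)) := by
  have h : (2 * ((n : ℝ) + 1)) ≠ 0 := by positivity
  have e : (((k + 1 : ℕ) : ℤ) - 1) = ((k : ℤ) - 1) + 1 := by push_cast; ring
  rw [lehmerCoeff, lehmerCoeff, e, zpow_add_one₀ h]
  ring

lemma lehmerCoeff_zero_zero : lehmerCoeff 0 0 = 1 := by
  norm_num [lehmerCoeff, Nat.centralBinom, Nat.choose]

lemma lehmerCoeff_zero_succ (n : ℕ) :
    (2 * (n : ℝ) + 3) * lehmerCoeff 0 (n + 1) = (2 * (n : ℝ) + 2) * lehmerCoeff 0 n := by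
  have h : ((n : ℝ) + 2) * (Nat.centralBinom (n + 2) : ℝ)
      = 2 * (2 * n + 3) * (Nat.centralBinom (n + 1) : ℝ) := by
    have := Nat.succ_mul_centralBinom_succ (n + 1)
    have h' := congrArg (Nat.cast : ℕ → ℝ) this
    push_cast at h'
    linear_combination h'
  have h1 : (Nat.centralBinom (n + 1) : ℝ) ≠ 0 := by
    exact_mod_cast Nat.centralBinom_ne_zero _
  have h2 : (Nat.centralBinom (n + 2) : ℝ) ≠ 0 := by
    exact_mod_cast Nat.centralBinom_ne_zero _
  have h3 : (n : ℝ) + 1 ≠ 0 := by positivity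
  have h4 : (n : ℝ) + 1 + 1 ≠ 0 := by positivity
  simp only [lehmerCoeff, Nat.cast_zero, zero_sub, zpow_neg_one, Nat.cast_add, Nat.cast_one]
  rw [show n + 1 + 1 = n + 2 from rfl]
  field_simp
  linear_combination (-(2 * 4 ^ (n + 1)) : ℝ) * h

lemma abs_lehmerCoeff_le (k n : ℕ) : |lehmerCoeff k n| ≤ 2 ^ k * ((n : ℝ) + 1) ^ k := by
  have hc : (0 : ℝ) < (Nat.centralBinom (n + 1) : ℝ) := by
    exact_mod_cast Nat.centralBinom_pos _
  have hb : (4 : ℝ) ^ (n + 1) ≤ 2 * ((n : ℝ) + 1) * (Nat.centralBinom (n + 1) : ℝ) := by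
    exact_mod_cast Nat.four_pow_le_two_mul_self_mul_centralBinom (n + 1) n.succ_pos
  have h : (0 : ℝ) < 2 * ((n : ℝ) + 1) := by positivity
  rw [abs_of_nonneg (by unfold lehmerCoeff; positivity), lehmerCoeff, div_le_iff₀ hc]
  calc (2 * ((n : ℝ) + 1)) ^ ((k : ℤ) - 1) * 4 ^ (n + 1)
      ≤ (2 * ((n : ℝ) + 1)) ^ ((k : ℤ) - 1) *
          (2 * ((n : ℝ) + 1) * (Nat.centralBinom (n + 1) : ℝ)) := by gcongr
    _ = _ := by
      rw [zpow_sub_one₀ h.ne', zpow_natCast, ← mul_pow]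
      field_simp

lemma summable_succ_pow_mul_geometric (j : ℕ) {r : ℝ} (h0 : 0 < r) (h1 : r < 1) :
    Summable fun n : ℕ => ((n : ℝ) + 1) ^ j * r ^ n := by
  have h := (summable_nat_add_iff 1).mpr
    (summable_pow_mul_geometric_of_norm_lt_one (R := ℝ) j (r := r)
      (by rwa [Real.norm_of_nonneg h0.le]))
  refine (h.mul_left r⁻¹).congr fun n => ?_
  push_cast
  rw [pow_succ]
  field_simp

/-- A series with polynomially bounded coefficients may be differentiated termwise on `(-1, 1)`. -/
lemma hasDerivAt_tsum_mul_pow {a : ℕ → ℝ} {K : ℝ} {j : ℕ}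
    (ha : ∀ n : ℕ, |a n| ≤ K * ((n : ℝ) + 1) ^ j) (s : ℕ) {z : ℝ} (hz : |z| < 1) :
    HasDerivAt (fun y : ℝ => ∑' n, a n * y ^ (2 * n + s + 1))
      (∑' n, a n * ((2 * n + s + 1 : ℕ) * z ^ (2 * n + s))) z := by
  obtain ⟨r, hzr, hr1⟩ := exists_between hz
  have hr0 : 0 < r := (abs_nonneg z).trans_lt hzr
  have hK : 0 ≤ K := by simpa using (abs_nonneg _).trans (ha 0)
  refine hasDerivAt_tsum_of_isPreconnected
    (u := fun n : ℕ => K * (s + 2) * (((n : ℝ) + 1) ^ (j + 1) * r ^ n))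
    (g := fun n y => a n * y ^ (2 * n + s + 1))
    (g' := fun n y => a n * ((2 * n + s + 1 : ℕ) * y ^ (2 * n + s)))
    (t := Metric.ball 0 r) (y₀ := 0)
    ((summable_succ_pow_mul_geometric (j + 1) hr0 hr1).mul_left _)
    Metric.isOpen_ball (convex_ball _ _).isPreconnected
    (fun n y _ => by simpa using (hasDerivAt_pow (2 * n + s + 1) y).const_mul (a n)) ?_
    (Metric.mem_ball_self hr0) (by simp)
    (by simpa using hzr)
  intro n y hy
  have hy : |y| < r := by simpa using hy
  rw [Real.norm_eq_abs, abs_mul, abs_mul, abs_pow, Nat.abs_cast]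
  have e1 : |y| ^ (2 * n + s) ≤ r ^ n :=
    (pow_le_pow_left₀ (abs_nonneg y) hy.le _).trans
      (pow_le_pow_of_le_one hr0.le hr1.le (by omega))
  have e2 : ((2 * n + s + 1 : ℕ) : ℝ) ≤ (s + 2) * ((n : ℝ) + 1) := by
    push_cast
    nlinarith [mul_nonneg (Nat.cast_nonneg (α := ℝ) s) (Nat.cast_nonneg (α := ℝ) n)]
  calc |a n| * (((2 * n + s + 1 : ℕ) : ℝ) * |y| ^ (2 * n + s))
      ≤ (K * ((n : ℝ) + 1) ^ j) * (((s + 2) * ((n : ℝ) + 1)) * r ^ n) := by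
        gcongr
        exact ha n
    _ = _ := by ring

lemma summable_mul_pow {a : ℕ → ℝ} {K : ℝ} {j : ℕ}
    (ha : ∀ n : ℕ, |a n| ≤ K * ((n : ℝ) + 1) ^ j) (s : ℕ) {z : ℝ} (hz : |z| < 1) :
    Summable fun n => a n * z ^ (2 * n + s) := by
  obtain ⟨r, hzr, hr1⟩ := exists_between hz
  have hr0 : 0 < r := (abs_nonneg z).trans_lt hzr
  refine Summable.of_norm_bounded
    ((summable_succ_pow_mul_geometric j hr0 hr1).mul_left K) fun n => ?_
  rw [Real.norm_eq_abs, abs_mul, abs_pow, ← mul_assoc]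
  have e1 : |z| ^ (2 * n + s) ≤ r ^ n :=
    (pow_le_pow_left₀ (abs_nonneg z) hzr.le _).trans
      (pow_le_pow_of_le_one hr0.le hr1.le (by omega))
  have := (abs_nonneg _).trans (ha n)
  exact mul_le_mul (ha n) e1 (by positivity) this

lemma one_sub_sq_pos {z : ℝ} (hz : |z| < 1) : 0 < 1 - z ^ 2 := by
  have := (sq_lt_one_iff_abs_lt_one z).mpr hz
  linarith

lemma hasDerivAt_arcsin_of_abs_lt_one {z : ℝ} (hz : |z| < 1) :
    HasDerivAt Real.arcsin (1 / √(1 - z ^ 2)) z :=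
  Real.hasDerivAt_arcsin (abs_lt.mp hz).1.ne' (abs_lt.mp hz).2.ne

lemma hasDerivAt_sqrt_one_sub_sq {z : ℝ} (hz : |z| < 1) :
    HasDerivAt (fun y : ℝ => √(1 - y ^ 2)) (-z / √(1 - z ^ 2)) z := by
  have h := (((hasDerivAt_id' z).fun_pow 2).const_sub 1).sqrt (one_sub_sq_pos hz).ne'
  refine h.congr_deriv ?_
  have := (Real.sqrt_pos.mpr (one_sub_sq_pos hz)).ne'
  simp
  field_simp

/-- The series `y = ∑ c_n z ^ (2n+1)` solves `(1 - z²) y' = 1 + z y`. -/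
lemma one_sub_sq_mul_tsum_lehmerCoeff_zero {z : ℝ} (hz : |z| < 1) :
    (1 - z ^ 2) * ∑' n, lehmerCoeff 0 n * ((2 * n + 0 + 1 : ℕ) * z ^ (2 * n + 0)) =
      1 + z * ∑' n, lehmerCoeff 0 n * z ^ (2 * n + 0 + 1) := by
  set b : ℕ → ℝ := fun n => lehmerCoeff 0 n * (2 * n + 1) with hb
  have hc : ∀ n : ℕ, |lehmerCoeff 0 n| ≤ 1 * ((n : ℝ) + 1) ^ 0 := fun n => by
    simpa using abs_lehmerCoeff_le 0 n
  have hbb : ∀ n : ℕ, |b n| ≤ 2 * ((n : ℝ) + 1) ^ 1 := fun n => by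
    have h1 : |lehmerCoeff 0 n| ≤ 1 := by simpa using hc n
    have h2 : |(2 * n + 1 : ℝ)| = 2 * n + 1 := abs_of_nonneg (by positivity)
    rw [hb, abs_mul, h2]
    nlinarith [Nat.cast_nonneg (α := ℝ) n]
  have S0 := summable_mul_pow hbb 0 hz
  have S2 := summable_mul_pow hbb 2 hz
  have SC := summable_mul_pow hc 2 hz
  have e0 : ∑' n, lehmerCoeff 0 n * ((2 * n + 0 + 1 : ℕ) * z ^ (2 * n + 0)) =
      ∑' n, b n * z ^ (2 * n + 0) := tsum_congr fun n => by
    simp only [hb]; push_cast; ring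
  have e1 : z * ∑' n, lehmerCoeff 0 n * z ^ (2 * n + 0 + 1) =
      ∑' n, lehmerCoeff 0 n * z ^ (2 * n + 2) := by
    rw [← tsum_mul_left]
    exact tsum_congr fun n => by ring
  have e2 : z ^ 2 * ∑' n, b n * z ^ (2 * n + 0) = ∑' n, b n * z ^ (2 * n + 2) := by
    rw [← tsum_mul_left]
    exact tsum_congr fun n => by ring
  have e3 : ∑' n, b n * z ^ (2 * n + 0) =
      1 + ∑' n, (b n * z ^ (2 * n + 2) + lehmerCoeff 0 n * z ^ (2 * n + 2)) := by
    rw [S0.tsum_eq_zero_add]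
    congr 1
    · simp [hb, lehmerCoeff_zero_zero]
    · refine tsum_congr fun n => ?_
      simp only [hb]
      push_cast
      linear_combination z ^ (2 * n + 2) * lehmerCoeff_zero_succ n
  rw [e0, e1, sub_mul, e2, e3, S2.tsum_add SC]
  ring

lemma tsum_lehmerCoeff_zero {z : ℝ} (hz : |z| < 1) :
    ∑' n, lehmerCoeff 0 n * z ^ (2 * n + 0 + 1) = Real.arcsin z / √(1 - z ^ 2) := by
  set y : ℝ → ℝ := fun x => ∑' n, lehmerCoeff 0 n * x ^ (2 * n + 0 + 1) with hy
  have hd : ∀ x ∈ Metric.ball (0 : ℝ) 1,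
      HasDerivAt (fun x => √(1 - x ^ 2) * y x - Real.arcsin x) 0 x := by
    intro x hx
    have hx : |x| < 1 := by simpa using hx
    have hw := one_sub_sq_pos hx
    have hs := (Real.sqrt_pos.mpr hw).ne'
    have hq := Real.sq_sqrt hw.le
    have h := ((hasDerivAt_sqrt_one_sub_sq hx).mul
      (hasDerivAt_tsum_mul_pow (abs_lehmerCoeff_le 0) 0 hx)).sub
      (hasDerivAt_arcsin_of_abs_lt_one hx)
    refine h.congr_deriv ?_
    have hode := one_sub_sq_mul_tsum_lehmerCoeff_zero hx
    generalize ∑' n, lehmerCoeff 0 n * ((2 * n + 0 + 1 : ℕ) * x ^ (2 * n + 0)) = d at *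
    field_simp
    rw [hq]
    linear_combination hode
  have hconst := Metric.isOpen_ball.is_const_of_deriv_eq_zero
    (convex_ball (0 : ℝ) 1).isPreconnected
    (fun x hx => (hd x hx).differentiableAt.differentiableWithinAt)
    (fun x hx => (hd x hx).deriv) (show z ∈ Metric.ball (0 : ℝ) 1 by simpa using hz)
    (Metric.mem_ball_self one_pos)
  have hs := (Real.sqrt_pos.mpr (one_sub_sq_pos hz)).ne'
  rw [eq_div_iff hs]
  simp [hy] at hconst ⊢
  linarith

/-- The closed form of the series, with the half-integer power of `1 - z²` split up. -/
noncomputable def lehmerClosedForm (k : ℕ) (z : ℝ) : ℝ :=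
  z * (z * √(1 - z ^ 2) * (lehmerP k).eval (z ^ 2) + Real.arcsin z * (lehmerQ k).eval (z ^ 2)) /
    ((1 - z ^ 2) ^ k * √(1 - z ^ 2))

lemma hasDerivAt_eval_sq (p : Polynomial ℝ) (z : ℝ) :
    HasDerivAt (fun y : ℝ => p.eval (y ^ 2)) ((derivative p).eval (z ^ 2) * (2 * z)) z := by
  simpa [Function.comp_def] using (p.hasDerivAt (z ^ 2)).comp z (hasDerivAt_pow 2 z)

lemma hasDerivAt_one_sub_sq_pow (k : ℕ) {z : ℝ} (hz : |z| < 1) :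
    HasDerivAt (fun y : ℝ => (1 - y ^ 2) ^ k) (-(2 * k * z * (1 - z ^ 2) ^ k) / (1 - z ^ 2)) z := by
  have h := (((hasDerivAt_id' z).fun_pow 2).const_sub 1).fun_pow k
  refine h.congr_deriv ?_
  have hw := (one_sub_sq_pos hz).ne'
  cases k with
  | zero => simp
  | succ k =>
    rw [eq_div_iff hw]
    simp
    ring

lemma mul_deriv_lehmerClosedForm (k : ℕ) {z d : ℝ} (hz : |z| < 1)
    (hd : HasDerivAt (lehmerClosedForm k) d z) : z * d = lehmerClosedForm (k + 1) z := by
  have hw := one_sub_sq_pos hz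
  have hs := (Real.sqrt_pos.mpr hw).ne'
  have hq := Real.sq_sqrt hw.le
  have hsq := hasDerivAt_sqrt_one_sub_sq hz
  have hu : (1 - z ^ 2) ^ k ≠ 0 := (pow_pos hw k).ne'
  have h := ((hasDerivAt_id' z).mul
    ((((hasDerivAt_id' z).mul hsq).mul (hasDerivAt_eval_sq (lehmerP k) z)).add
      ((hasDerivAt_arcsin_of_abs_lt_one hz).mul (hasDerivAt_eval_sq (lehmerQ k) z)))).div
    ((hasDerivAt_one_sub_sq_pow k hz).mul hsq) (mul_ne_zero hu hs)
  rw [hd.unique h]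
  simp only [lehmerClosedForm, lehmerP, lehmerQ, pow_succ (1 - z ^ 2) k, eval_add, eval_mul,
    eval_sub, eval_C, eval_X, eval_one, eval_ofNat, Pi.mul_apply, Pi.add_apply]
  generalize √(1 - z ^ 2) = s at *
  generalize (1 - z ^ 2) ^ k = u at *
  generalize eval (z ^ 2) (lehmerP k) = P
  generalize eval (z ^ 2) (lehmerQ k) = Q
  generalize eval (z ^ 2) (derivative (lehmerP k)) = P'
  generalize eval (z ^ 2) (derivative (lehmerQ k)) = Q'
  generalize Real.arcsin z = A
  rw [← hq]
  field_simp
  rw [show z ^ 2 = 1 - s ^ 2 by rw [hq]; ring]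
  linear_combination (2 * z * s ^ 2 * A * Q') * hq

lemma tsum_lehmerCoeff (k : ℕ) :
    ∀ z : ℝ, |z| < 1 → ∑' n, lehmerCoeff k n * z ^ (2 * n + 1 + 1) = lehmerClosedForm k z := by
  induction k with
  | zero =>
    intro z hz
    have h : ∑' n, lehmerCoeff 0 n * z ^ (2 * n + 1 + 1) =
        z * ∑' n, lehmerCoeff 0 n * z ^ (2 * n + 0 + 1) := by
      rw [← tsum_mul_left]
      exact tsum_congr fun n => by ring
    rw [h, tsum_lehmerCoeff_zero hz]
    simp [lehmerClosedForm, lehmerP, lehmerQ, mul_div_assoc]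
  | succ k ih =>
    intro z hz
    have hd := hasDerivAt_tsum_mul_pow (abs_lehmerCoeff_le k) 1 hz
    have he : lehmerClosedForm k =ᶠ[nhds z]
        fun y => ∑' n, lehmerCoeff k n * y ^ (2 * n + 1 + 1) := by
      filter_upwards [(isOpen_lt continuous_abs continuous_const).mem_nhds hz] with y hy
      exact (ih y hy).symm
    rw [← mul_deriv_lehmerClosedForm k hz (hd.congr_of_eventuallyEq he), ← tsum_mul_left]
    refine tsum_congr fun n => ?_
    rw [lehmerCoeff_succ]
    push_cast
    ring

/-- **Lehmer.** For every integer `k ≥ 0` and real `z` with `|z| < 1`,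
`∑_{n=1}^∞ (2n)^{k-1} (2z)^{2n} / C(2n,n)
  = z/(1-z²)^{k+1/2} ( z √(1-z²) p_{k-1}(z²) + arcsin(z) q_{k-1}(z²) )`. -/
theorem lehmer_negative_integer_values (k : ℕ) (z : ℝ) (hz : |z| < 1) :
    ∑' n : ℕ, (2 * ((n : ℝ) + 1)) ^ ((k : ℤ) - 1) * (2 * z) ^ (2 * (n + 1)) /
        (Nat.centralBinom (n + 1) : ℝ) =
      z / (1 - z ^ 2) ^ ((k : ℝ) + 1 / 2) *
        (z * Real.sqrt (1 - z ^ 2) * (lehmerP k).eval (z ^ 2) +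
          Real.arcsin z * (lehmerQ k).eval (z ^ 2)) := by
  have hw := one_sub_sq_pos hz
  rw [Real.rpow_add hw, Real.rpow_natCast, ← Real.sqrt_eq_rpow, div_mul_eq_mul_div]
  refine Eq.trans (tsum_congr fun n => ?_) (tsum_lehmerCoeff k z hz)
  rw [lehmerCoeff, mul_pow, pow_mul 2]
  norm_num
  ring
end

section
/- For every integer n ≥ 0 and all real x: p_n(x) = 2^n · Σ_{k=0}^n C(n+1,k)·E_{n-k}(x,1/2)·E_k(x,1/2), and for every integer n ≥ 0: q_{n-1}(x) = 2^n · E_n(x,1/2). -/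
open Polynomial

/-- The convolution sum of the polynomials `lehmerQ` satisfies the recursion defining `lehmerP`. -/
theorem lehmerP_eq_sum (n : ℕ) :
    lehmerP n = ∑ k ∈ Finset.range n,
      (Nat.choose n k : ℝ[X]) * lehmerQ (n - 1 - k) * lehmerQ k := by
  induction n with
  | zero => simp [lehmerP]
  | succ n ih =>
    have term_eq : ∀ k ∈ Finset.range n,
        C 2 * (C ((n : ℝ) - 1) * X + 1) *
            ((Nat.choose n k : ℝ[X]) * lehmerQ (n - 1 - k) * lehmerQ k)
          + (2 * X * (1 - X)) *
            derivative ((Nat.choose n k : ℝ[X]) * lehmerQ (n - 1 - k) * lehmerQ k)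
        = (Nat.choose n k : ℝ[X]) * lehmerQ (n - k) * lehmerQ k
          + (Nat.choose n k : ℝ[X]) * lehmerQ (n - (k + 1)) * lehmerQ (k + 1) := by
      intro k hk
      obtain ⟨m, rfl⟩ : ∃ m, n = k + m + 1 :=
        ⟨n - k - 1, by have := Finset.mem_range.mp hk; omega⟩
      have h₁ : k + m + 1 - 1 - k = m := by omega
      have h₂ : k + m + 1 - k = m + 1 := by omega
      have h₃ : k + m + 1 - (k + 1) = m := by omega
      rw [h₁, h₂, h₃]
      simp only [lehmerQ, derivative_mul, derivative_natCast]
      simp only [map_sub, map_mul, map_natCast, map_ofNat, map_one]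
      push_cast
      ring
    have shift : ∑ k ∈ Finset.range (n + 1),
          (Nat.choose (n + 1) k : ℝ[X]) * lehmerQ (n - k) * lehmerQ k
        = ∑ k ∈ Finset.range (n + 1), (Nat.choose n k : ℝ[X]) * lehmerQ (n - k) * lehmerQ k
          + ∑ k ∈ Finset.range n,
            (Nat.choose n k : ℝ[X]) * lehmerQ (n - (k + 1)) * lehmerQ (k + 1) := by
      rw [Finset.sum_range_succ', Finset.sum_range_succ' _ n, add_right_comm,
        ← Finset.sum_add_distrib]
      congr 1
      · refine Finset.sum_congr rfl fun k _ => ?_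
        rw [Nat.choose_succ_succ]
        push_cast
        ring
      · simp
    rw [lehmerP, ih, derivative_sum, Finset.mul_sum, Finset.mul_sum, ← Finset.sum_add_distrib,
      Finset.sum_congr rfl term_eq, Nat.add_sub_cancel, shift, Finset.sum_range_succ,
      Finset.sum_add_distrib]
    simp [lehmerQ]
    ring

/-- Coefficients of an exponential generating function are derivatives at the origin. -/
theorem eq_iteratedDeriv_of_hasSum {a : ℕ → ℝ} {f : ℝ → ℝ}
    (h : ∀ᶠ t in nhds (0 : ℝ), HasSum (fun n : ℕ => a n * t ^ n / (Nat.factorial n : ℝ)) (f t))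
    (n : ℕ) : a n = iteratedDeriv n f 0 := by
  have hf : HasFPowerSeriesAt f
      (FormalMultilinearSeries.ofScalars ℝ fun n => a n / (Nat.factorial n : ℝ)) 0 := by
    rw [hasFPowerSeriesAt_iff]
    filter_upwards [h] with t ht
    rw [zero_add]
    refine (congrArg (HasSum · (f t)) (funext fun m => ?_)).mpr ht
    rw [FormalMultilinearSeries.coeff_ofScalars, smul_eq_mul]
    ring
  have hc := congrArg (fun p => FormalMultilinearSeries.coeff p n)
    (hf.eq_formalMultilinearSeries hf.analyticAt.hasFPowerSeriesAt)
  simp only [FormalMultilinearSeries.coeff_ofScalars] at hc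
  have hn : (Nat.factorial n : ℝ) ≠ 0 := by positivity
  field_simp at hc
  exact hc

/-- The derivatives of the square root of the Eulerian generating function near the origin. -/
theorem iteratedDeriv_eulerian_half {x : ℝ} (hx : x ≠ 1) (n : ℕ) :
    ∀ᶠ t in nhds (0 : ℝ),
      2 ^ n * iteratedDeriv n
          (fun t => ((1 - x) / (Real.exp (t * (x - 1)) - x)) ^ (1 / 2 : ℝ)) t =
        ((1 - x) / (Real.exp (t * (x - 1)) - x)) ^ (1 / 2 : ℝ) *
          ((1 - x) / (1 - x * Real.exp (t * (1 - x)))) ^ n *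
          (lehmerQ n).eval (x * Real.exp (t * (1 - x))) := by
  have hx' : 1 - x ≠ 0 := sub_ne_zero.mpr hx.symm
  have hpos : ∀ᶠ t in nhds (0 : ℝ), 0 < (1 - x) / (Real.exp (t * (x - 1)) - x) := by
    have hcont : ContinuousAt (fun t : ℝ => (1 - x) / (Real.exp (t * (x - 1)) - x)) 0 :=
      ContinuousAt.div (by fun_prop) (by fun_prop) (by simpa using hx')
    exact hcont.eventually_const_lt (by simp [div_self hx'])
  induction n with
  | zero => simp [lehmerQ]
  | succ n ih =>
    have ih' : iteratedDeriv n
          (fun t => ((1 - x) / (Real.exp (t * (x - 1)) - x)) ^ (1 / 2 : ℝ)) =ᶠ[nhds 0]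
        fun t => (2 ^ n)⁻¹ * (((1 - x) / (Real.exp (t * (x - 1)) - x)) ^ (1 / 2 : ℝ) *
          ((1 - x) / (1 - x * Real.exp (t * (1 - x)))) ^ n *
          (lehmerQ n).eval (x * Real.exp (t * (1 - x)))) := by
      filter_upwards [ih] with t ht
      rw [← ht, inv_mul_cancel_left₀ (by positivity)]
    filter_upwards [ih'.deriv, hpos] with t ht hpos
    have hW : Real.exp (t * (x - 1)) - x ≠ 0 := by
      intro h
      simp [h] at hpos
    have hexp : Real.exp (t * (x - 1)) * Real.exp (t * (1 - x)) = 1 := by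
      rw [← Real.exp_add, ← Real.exp_zero]
      ring_nf
    have hz : 1 - x * Real.exp (t * (1 - x)) ≠ 0 := by
      have hmul := mul_ne_zero hW (Real.exp_ne_zero (t * (1 - x)))
      rwa [sub_mul, hexp] at hmul
    have dz : HasDerivAt (fun t => x * Real.exp (t * (1 - x)))
        ((1 - x) * (x * Real.exp (t * (1 - x)))) t := by
      convert! (((hasDerivAt_id t).mul_const (1 - x)).exp.const_mul x) using 1
      simp
      ring
    have dF : HasDerivAt (fun t => (1 - x) / (Real.exp (t * (x - 1)) - x))
        ((1 - x) / (Real.exp (t * (x - 1)) - x) *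
          ((1 - x) / (1 - x * Real.exp (t * (1 - x))))) t := by
      convert! (hasDerivAt_const t (1 - x)).div
        (((hasDerivAt_id t).mul_const (x - 1)).exp.sub_const x) hW using 1
      simp only [id]
      generalize Real.exp (t * (x - 1)) = a at hexp hW ⊢
      generalize Real.exp (t * (1 - x)) = b at hexp hz ⊢
      rw [div_mul_div_comm, div_eq_div_iff (mul_ne_zero hW hz) (pow_ne_zero 2 hW)]
      linear_combination (1 - x) ^ 2 * (a - x) * x * hexp
    have dG : HasDerivAt (fun t => ((1 - x) / (Real.exp (t * (x - 1)) - x)) ^ (1 / 2 : ℝ))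
        (((1 - x) / (Real.exp (t * (x - 1)) - x)) ^ (1 / 2 : ℝ) *
          ((1 - x) / (1 - x * Real.exp (t * (1 - x)))) / 2) t := by
      convert! dF.rpow_const (p := 1 / 2) (Or.inl hpos.ne') using 1
      rw [Real.rpow_sub_one hpos.ne']
      field_simp
    have dA : HasDerivAt (fun t => (1 - x) / (1 - x * Real.exp (t * (1 - x))))
        (((1 - x) / (1 - x * Real.exp (t * (1 - x)))) ^ 2 *
          (x * Real.exp (t * (1 - x)))) t := by
      convert! (hasDerivAt_const t (1 - x)).div (dz.const_sub 1) hz using 1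
      field_simp
      ring
    have dQ := ((lehmerQ n).hasDerivAt (x * Real.exp (t * (1 - x)))).comp t dz
    have hd := (((dG.mul (dA.pow n)).mul dQ).const_mul ((2 ^ n : ℝ)⁻¹)).deriv
    rw [iteratedDeriv_succ, ht]
    refine (congrArg (fun r => 2 ^ (n + 1) * r) hd).trans ?_
    have hA : (1 - x) / (1 - x * Real.exp (t * (1 - x))) *
        (1 - x * Real.exp (t * (1 - x))) = 1 - x := div_mul_cancel₀ _ hz
    simp only [lehmerQ, eval_add, eval_mul, eval_C, eval_X, eval_one, eval_sub, eval_ofNat,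
      Function.comp, Pi.mul_apply, Pi.pow_apply]
    generalize (1 - x) / (1 - x * Real.exp (t * (1 - x))) = A at *
    generalize ((1 - x) / (Real.exp (t * (x - 1)) - x)) ^ (1 / 2 : ℝ) = G at *
    generalize x * Real.exp (t * (1 - x)) = z at *
    rw [← hA]
    rcases n with _ | n
    · simp
      ring
    · rw [Nat.add_sub_cancel]
      field_simp
      ring

/-- **(Bényi–Matsusaka.)** If `E n x y` is the family of bivariate Eulerian polynomials,
characterized by the exponential generating function
`∑_{n≥0} E_n(x,y) tⁿ/n! = ((1-x)/(e^{t(x-1)} - x))^y` (for `t` near `0`), then for every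
`n ≥ 0`: `p_n(x) = 2ⁿ ∑_{k=0}^n C(n+1,k) E_{n-k}(x,1/2) E_k(x,1/2)` and
`q_{n-1}(x) = 2ⁿ E_n(x,1/2)`. -/
theorem lehmer_poly_eq_eulerian (E : ℕ → ℝ → ℝ → ℝ)
    (hE : ∀ x y : ℝ, x ≠ 1 → ∃ ε > 0, ∀ t : ℝ, |t| < ε →
      HasSum (fun n : ℕ => E n x y * t ^ n / (Nat.factorial n : ℝ))
        (((1 - x) / (Real.exp (t * (x - 1)) - x)) ^ y)) :
    (∀ n : ℕ, ∀ x : ℝ, x ≠ 1 →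
      (lehmerP (n + 1)).eval x =
        2 ^ n * ∑ k ∈ Finset.range (n + 1),
          (Nat.choose (n + 1) k : ℝ) * E (n - k) x (1 / 2) * E k x (1 / 2)) ∧
    (∀ n : ℕ, ∀ x : ℝ, x ≠ 1 →
      (lehmerQ n).eval x = 2 ^ n * E n x (1 / 2)) := by
  have hQ : ∀ n : ℕ, ∀ x : ℝ, x ≠ 1 → (lehmerQ n).eval x = 2 ^ n * E n x (1 / 2) := by
    intro n x hx
    obtain ⟨ε, hε, hsum⟩ := hE x (1 / 2) hx
    have hnear : ∀ᶠ t in nhds (0 : ℝ), |t| < ε :=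
      continuous_abs.continuousAt.eventually_lt_const (by simpa using hε)
    rw [eq_iteratedDeriv_of_hasSum (a := fun n => E n x (1 / 2)) (hnear.mono hsum) n,
      (iteratedDeriv_eulerian_half hx n).self_of_nhds]
    have hx' : 1 - x ≠ 0 := sub_ne_zero.mpr hx.symm
    simp [div_self hx']
  refine ⟨fun n x hx => ?_, hQ⟩
  rw [lehmerP_eq_sum, eval_finsetSum, Finset.mul_sum]
  refine Finset.sum_congr rfl fun k hk => ?_
  have hk' : k ≤ n := Nat.lt_succ_iff.mp (Finset.mem_range.mp hk)
  have hpow : (2 : ℝ) ^ n = 2 ^ (n - k) * 2 ^ k := by rw [← pow_add, Nat.sub_add_cancel hk']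
  rw [eval_mul, eval_mul, eval_natCast, Nat.add_sub_cancel, hQ _ x hx, hQ _ x hx, hpow]
  ring
end

section
/- For every integer n ≥ 0, (2/3)^n · p_n(1/4) = Σ_{k=0}^n B_{n-k}^{(-k)}, where B_m^{(j)} are poly-Bernoulli numbers. -/
open Polynomial

open scoped PowerSeries

/-- The numbers `j! S(k+1, j+1)`, where `S` denotes the Stirling numbers of the second kind. -/
noncomputable def factorialStirling (k j : ℕ) : ℝ :=
  j.factorial * Nat.stirlingSecond (k + 1) (j + 1)

lemma factorialStirling_zero_left (j : ℕ) : factorialStirling 0 j = if j = 0 then 1 else 0 := by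
  cases j with
  | zero => simp [factorialStirling, Nat.stirlingSecond_one_right]
  | succ j => simp [factorialStirling, Nat.stirlingSecond_eq_zero_of_lt]

lemma factorialStirling_eq_zero {k j : ℕ} (h : k < j) : factorialStirling k j = 0 := by
  simp [factorialStirling, Nat.stirlingSecond_eq_zero_of_lt (Nat.succ_lt_succ h)]

lemma factorialStirling_succ_left (k j : ℕ) :
    factorialStirling (k + 1) j =
      (j + 1) * factorialStirling k j + j * factorialStirling k (j - 1) := by
  cases j with
  | zero => simp [factorialStirling, Nat.stirlingSecond_one_right]
  | succ j =>
    simp only [factorialStirling, Nat.stirlingSecond_succ_succ (k + 1), Nat.factorial_succ,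
      Nat.add_sub_cancel]
    push_cast
    ring

/-- Expansion of a power of `m + 1` in binomial coefficients of `m`. -/
lemma add_one_pow_eq_sum_choose (m k : ℕ) :
    ((m : ℝ) + 1) ^ k = ∑ j ∈ Finset.range (k + 1), factorialStirling k j * m.choose j := by
  induction k with
  | zero => simp [factorialStirling_zero_left]
  | succ k ih =>
    have hchoose (j : ℕ) : ((m : ℝ) + 1) * m.choose j =
        (j + 1) * m.choose j + (j + 1) * m.choose (j + 1) := by
      have h := Nat.add_one_mul_choose_eq m j
      rw [Nat.choose_succ_succ] at h
      have h' : ((m : ℝ) + 1) * m.choose j =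
        (m.choose j + m.choose (j + 1)) * (j + 1) := by exact_mod_cast h
      linarith
    rw [pow_succ, ih, Finset.sum_mul]
    have hterm (j : ℕ) : factorialStirling k j * m.choose j * ((m : ℝ) + 1) =
        (j + 1) * factorialStirling k j * m.choose j +
          (j + 1) * factorialStirling k j * m.choose (j + 1) := by
      linear_combination factorialStirling k j * hchoose j
    simp only [hterm, factorialStirling_succ_left, add_mul _ _ ((_ : ℕ) : ℝ),
      Finset.sum_add_distrib]
    congr 1
    · rw [Finset.sum_range_succ _ (k + 1), factorialStirling_eq_zero k.lt_succ_self]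
      simp
    · rw [Finset.sum_range_succ' _ (k + 1)]
      simp

lemma hasSum_choose_mul_pow (j : ℕ) {u : ℝ} (hu : |u| < 1) :
    HasSum (fun m : ℕ => (m.choose j : ℝ) * u ^ m) (u ^ j / (1 - u) ^ (j + 1)) := by
  have h := (hasSum_choose_mul_geometric_of_norm_lt_one j (r := u) hu).mul_left (u ^ j)
  rw [mul_one_div] at h
  refine (hasSum_iff_hasSum_of_ne_zero_bij (fun m => (m : ℕ) + j) ?_ ?_ ?_).2 h
  · intro a b hab
    exact Subtype.ext (by simpa using hab)
  · intro m hm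
    have hjm : j ≤ m := by
      by_contra hlt
      exact hm (by simp [Nat.choose_eq_zero_of_lt (not_le.1 hlt)])
    refine ⟨⟨m - j, ?_⟩, by simp [hjm]⟩
    simp only [Function.mem_support, Nat.sub_add_cancel hjm] at hm ⊢
    intro h0
    apply hm
    rw [← Nat.sub_add_cancel hjm, pow_add]
    simp only [Nat.sub_add_cancel hjm]
    linarith
  · intro m
    simp only [pow_add]
    ring

lemma tsum_pow_mul_one_sub_exp_neg (k : ℕ) {t : ℝ} (ht : |1 - Real.exp (-t)| < 1) :
    ∑' m : ℕ, (1 - Real.exp (-t)) ^ m / ((m : ℝ) + 1) ^ (-(k : ℤ)) =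
      ∑ j ∈ Finset.range (k + 1),
        factorialStirling k j * (Real.exp t * (Real.exp t - 1) ^ j) := by
  have hsum := hasSum_sum (s := Finset.range (k + 1)) fun j _ =>
    (hasSum_choose_mul_pow j ht).mul_left (factorialStirling k j)
  have hfun (m : ℕ) : (1 - Real.exp (-t)) ^ m / ((m : ℝ) + 1) ^ (-(k : ℤ)) =
      ∑ j ∈ Finset.range (k + 1),
        factorialStirling k j * (m.choose j * (1 - Real.exp (-t)) ^ m) := by
    rw [zpow_neg, div_inv_eq_mul, zpow_natCast, add_one_pow_eq_sum_choose, Finset.mul_sum]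
    exact Finset.sum_congr rfl fun j _ => by ring
  rw [tsum_congr hfun, hsum.tsum_eq]
  refine Finset.sum_congr rfl fun j _ => ?_
  have h : 1 - Real.exp (-t) = (Real.exp t - 1) / Real.exp t := by
    rw [Real.exp_neg]
    field_simp
  rw [sub_sub_cancel, h, Real.exp_neg, div_pow, inv_pow, pow_succ]
  field_simp

lemma iteratedDeriv_exp_mul_exp_sub_one_pow (n j : ℕ) :
    iteratedDeriv n (fun t : ℝ => Real.exp t * (Real.exp t - 1) ^ j) 0 =
      factorialStirling n j := by
  induction n generalizing j with
  | zero => simp [factorialStirling_zero_left, zero_pow_eq]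
  | succ n ih =>
    have hderiv : deriv (fun t : ℝ => Real.exp t * (Real.exp t - 1) ^ j) =
        fun t => ((j : ℝ) + 1) * (Real.exp t * (Real.exp t - 1) ^ j) +
          j * (Real.exp t * (Real.exp t - 1) ^ (j - 1)) := by
      ext t
      have h := (Real.hasDerivAt_exp t).mul (((Real.hasDerivAt_exp t).sub_const 1).pow j)
      refine h.deriv.trans ?_
      cases j with
      | zero => simp
      | succ j =>
        simp only [Nat.add_sub_cancel, pow_succ, Pi.pow_apply]
        push_cast
        ring
    rw [iteratedDeriv_succ', hderiv, iteratedDeriv_fun_add (by fun_prop) (by fun_prop),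
      iteratedDeriv_const_mul_field, iteratedDeriv_const_mul_field, ih, ih,
      factorialStirling_succ_left]

/-- The classical formula `B_n^{(-k)} = ∑_j (j!)² S(n+1, j+1) S(k+1, j+1)`. -/
lemma polyBernoulli_neg_eq_sum (k : ℕ) (b : ℕ → ℝ)
    (hb : ∃ ε > 0, ∀ t : ℝ, |t| < ε →
      HasSum (fun n : ℕ => b n * t ^ n / (Nat.factorial n : ℝ))
        (∑' m : ℕ, (1 - Real.exp (-t)) ^ m / ((m : ℝ) + 1) ^ (-(k : ℤ)))) (n : ℕ) :
    b n = ∑ j ∈ Finset.range (k + 1), factorialStirling k j * factorialStirling n j := by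
  obtain ⟨ε, hε, hsum⟩ := hb
  let f : ℝ → ℝ := fun t => ∑ j ∈ Finset.range (k + 1),
    factorialStirling k j * (Real.exp t * (Real.exp t - 1) ^ j)
  have hnear : ∀ᶠ t : ℝ in nhds 0, |1 - Real.exp (-t)| < 1 := by
    have hc : Continuous fun t : ℝ => |1 - Real.exp (-t)| := by fun_prop
    exact hc.continuousAt.eventually_lt_const (by simp)
  have hf : HasFPowerSeriesAt f
      (FormalMultilinearSeries.ofScalars ℝ fun n => b n / (n.factorial : ℝ)) 0 := by
    rw [hasFPowerSeriesAt_iff]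
    filter_upwards [hnear, Metric.ball_mem_nhds 0 hε] with t ht htε
    have h := hsum t (by simpa using htε)
    rw [tsum_pow_mul_one_sub_exp_neg k ht] at h
    simp only [zero_add, FormalMultilinearSeries.coeff_ofScalars, smul_eq_mul, f]
    exact h.congr_fun fun n => by ring
  have hcoeff := congrArg (fun p => FormalMultilinearSeries.coeff p n)
    (hf.eq_formalMultilinearSeries hf.analyticAt.hasFPowerSeriesAt)
  simp only [FormalMultilinearSeries.coeff_ofScalars] at hcoeff
  rw [div_left_inj' (by positivity)] at hcoeff
  rw [hcoeff, iteratedDeriv_fun_sum fun j _ => by fun_prop]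
  exact Finset.sum_congr rfl fun j _ => by
    rw [iteratedDeriv_const_mul_field, iteratedDeriv_exp_mul_exp_sub_one_pow]

instance : CharZero ℝ⟦X⟧ := algebraRat.charZero _

/-- The product rule for the formal derivative, written with multiplication. -/
lemma derivative_mul_eq (f g : ℝ⟦X⟧) :
    PowerSeries.derivative ℝ (f * g) =
      PowerSeries.derivative ℝ f * g + f * PowerSeries.derivative ℝ g := by
  rw [Derivation.leibniz, smul_eq_mul, smul_eq_mul]
  ring

/-- The power series of `eᵗ ∫₀ᵗ ((eˢ - 1)(eᵗ⁻ˢ - 1))ʲ ds`, defined by its raising recurrence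
in `j`. -/
noncomputable def expConvolution : ℕ → ℝ⟦X⟧
  | 0 => PowerSeries.X * PowerSeries.exp ℝ
  | j + 1 => PowerSeries.C (((j : ℝ) + 1)⁻¹) *
      ((3 * (j + 1) * PowerSeries.exp ℝ + (j - 1)) * expConvolution j -
        2 * (PowerSeries.exp ℝ - 1) * PowerSeries.derivative ℝ (expConvolution j))

lemma expConvolution_raise (j : ℕ) :
    ((j : ℝ⟦X⟧) + 1) * expConvolution (j + 1) =
      (3 * (j + 1) * PowerSeries.exp ℝ + (j - 1)) * expConvolution j -
        2 * (PowerSeries.exp ℝ - 1) * PowerSeries.derivative ℝ (expConvolution j) := by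
  have h : ((j : ℝ⟦X⟧) + 1) * PowerSeries.C (((j : ℝ) + 1)⁻¹) = 1 := by
    rw [show ((j : ℝ⟦X⟧) + 1) = PowerSeries.C ((j : ℝ) + 1) by simp, ← map_mul,
      mul_inv_cancel₀ (by positivity), map_one]
  rw [expConvolution, ← mul_assoc, h, one_mul]

lemma derivative_expConvolution_raise (j : ℕ) :
    ((j : ℝ⟦X⟧) + 1) * PowerSeries.derivative ℝ (expConvolution (j + 1)) =
      3 * (j + 1) * PowerSeries.exp ℝ * expConvolution j +
        ((3 * j + 1) * PowerSeries.exp ℝ + (j - 1)) *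
          PowerSeries.derivative ℝ (expConvolution j) -
        2 * (PowerSeries.exp ℝ - 1) *
          PowerSeries.derivative ℝ (PowerSeries.derivative ℝ (expConvolution j)) := by
  have h := congrArg (PowerSeries.derivative ℝ) (expConvolution_raise j)
  have h2 : PowerSeries.derivative ℝ (2 : ℝ⟦X⟧) = 0 := Derivation.map_natCast _ 2
  have h3 : PowerSeries.derivative ℝ (3 : ℝ⟦X⟧) = 0 := Derivation.map_natCast _ 3
  simp only [derivative_mul_eq, map_add, map_sub, PowerSeries.derivative_exp, h2, h3,
    PowerSeries.derivative_one, Derivation.map_natCast] at h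
  linear_combination h

private lemma second_order_of_lower (j : ℕ)
    (hlower : 2 * PowerSeries.derivative ℝ (expConvolution (j + 1)) =
      ((j : ℝ⟦X⟧) + 3) * expConvolution (j + 1) +
        (j + 1) * (PowerSeries.exp ℝ - 1) * expConvolution j) :
    PowerSeries.derivative ℝ (PowerSeries.derivative ℝ (expConvolution (j + 1))) =
      2 * ((j : ℝ⟦X⟧) + 2) * PowerSeries.derivative ℝ (expConvolution (j + 1)) -
        (j + 2) ^ 2 * expConvolution (j + 1) + (j + 1) ^ 2 * expConvolution j := by
  have h := congrArg (PowerSeries.derivative ℝ) hlower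
  have h2 : PowerSeries.derivative ℝ (2 : ℝ⟦X⟧) = 0 := Derivation.map_natCast _ 2
  have h3 : PowerSeries.derivative ℝ (3 : ℝ⟦X⟧) = 0 := Derivation.map_natCast _ 3
  simp only [derivative_mul_eq, map_add, map_sub, PowerSeries.derivative_exp, h2, h3,
    PowerSeries.derivative_one, Derivation.map_natCast] at h
  refine mul_left_cancel₀ (by norm_num : (4 : ℝ⟦X⟧) ≠ 0) ?_
  linear_combination 2 * h - (3 * j + 5) * hlower + (j + 1) * expConvolution_raise j

lemma expConvolution_lower (j : ℕ) :
    2 * PowerSeries.derivative ℝ (expConvolution (j + 1)) =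
      ((j : ℝ⟦X⟧) + 3) * expConvolution (j + 1) +
        (j + 1) * (PowerSeries.exp ℝ - 1) * expConvolution j := by
  induction j with
  | zero =>
    have h := derivative_expConvolution_raise 0
    have h' := expConvolution_raise 0
    simp only [expConvolution.eq_1, derivative_mul_eq, map_add, PowerSeries.derivative_exp,
      PowerSeries.derivative_X, PowerSeries.derivative_one, Nat.cast_zero] at h h' ⊢
    linear_combination 2 * h - 3 * h'
  | succ j ih =>
    have hne : ((j : ℝ⟦X⟧) + 2) ≠ 0 := by
      exact_mod_cast Nat.succ_ne_zero (j + 1)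
    refine mul_left_cancel₀ hne ?_
    have h := derivative_expConvolution_raise (j + 1)
    have h' := expConvolution_raise (j + 1)
    push_cast at h h' ⊢
    linear_combination 2 * h - (j + 4) * h' + 4 * (j + 1) * ih -
      4 * (PowerSeries.exp ℝ - 1) * second_order_of_lower j ih

lemma derivative_derivative_expConvolution (j : ℕ) :
    PowerSeries.derivative ℝ (PowerSeries.derivative ℝ (expConvolution j)) =
      PowerSeries.C (2 * ((j : ℝ) + 1)) * PowerSeries.derivative ℝ (expConvolution j) -
        PowerSeries.C (((j : ℝ) + 1) ^ 2) * expConvolution j +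
        PowerSeries.C ((j : ℝ) ^ 2) * expConvolution (j - 1) := by
  simp only [map_mul, map_add, map_pow, map_natCast, map_one, map_ofNat]
  cases j with
  | zero =>
    simp only [expConvolution.eq_1, derivative_mul_eq, map_add, PowerSeries.derivative_exp,
      PowerSeries.derivative_X, PowerSeries.derivative_one, Nat.cast_zero]
    ring
  | succ j =>
    have h := second_order_of_lower j (expConvolution_lower j)
    push_cast
    linear_combination h

lemma constantCoeff_expConvolution (j : ℕ) :
    PowerSeries.constantCoeff (expConvolution j) = 0 := by
  induction j with
  | zero => simp [expConvolution]
  | succ j ih => simp [expConvolution, ih]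

lemma coeff_one_expConvolution (j : ℕ) :
    PowerSeries.coeff 1 (expConvolution j) = if j = 0 then 1 else 0 := by
  cases j with
  | zero => simp [expConvolution]
  | succ j =>
    have h := congrArg PowerSeries.constantCoeff (expConvolution_lower j)
    simp only [map_mul, map_add, map_sub, constantCoeff_expConvolution, map_ofNat] at h
    rw [← PowerSeries.coeff_zero_eq_constantCoeff_apply (PowerSeries.derivative ℝ _),
      PowerSeries.coeff_derivative] at h
    simpa using h

lemma sq_mk_factorialStirling (j : ℕ) :
    PowerSeries.mk (factorialStirling · j) ^ 2 =
      PowerSeries.C (if j = 0 then 1 else 0) +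
        PowerSeries.C (2 * ((j : ℝ) + 1)) *
          (PowerSeries.X * PowerSeries.mk (factorialStirling · j) ^ 2) -
        PowerSeries.C (((j : ℝ) + 1) ^ 2) *
          (PowerSeries.X * (PowerSeries.X * PowerSeries.mk (factorialStirling · j) ^ 2)) +
        PowerSeries.C ((j : ℝ) ^ 2) *
          (PowerSeries.X * (PowerSeries.X * PowerSeries.mk (factorialStirling · (j - 1)) ^ 2)) := by
  have h : PowerSeries.mk (factorialStirling · j) =
      PowerSeries.C (if j = 0 then 1 else 0) +
        PowerSeries.X * (PowerSeries.C ((j : ℝ) + 1) * PowerSeries.mk (factorialStirling · j) +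
          PowerSeries.C (j : ℝ) * PowerSeries.mk (factorialStirling · (j - 1))) := by
    ext n
    cases n with
    | zero => simp [factorialStirling_zero_left]
    | succ n =>
      rw [map_add, PowerSeries.coeff_succ_X_mul, map_add, PowerSeries.coeff_C_mul,
        PowerSeries.coeff_C_mul, PowerSeries.coeff_C]
      simp [factorialStirling_succ_left]
  have hδ : PowerSeries.C (if j = 0 then (1 : ℝ) else 0) ^ 2 =
      PowerSeries.C (if j = 0 then 1 else 0) := by
    split_ifs <;> simp
  have hδj : PowerSeries.C (if j = 0 then (1 : ℝ) else 0) * PowerSeries.C (j : ℝ) = 0 := by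
    split_ifs with hj <;> simp [hj]
  generalize PowerSeries.C (if j = 0 then (1 : ℝ) else 0) = δ at *
  simp only [map_mul, map_pow, map_ofNat]
  generalize PowerSeries.mk (factorialStirling · j) = A at *
  generalize PowerSeries.mk (factorialStirling · (j - 1)) = A₁ at *
  generalize PowerSeries.C ((j : ℝ) + 1) = a at *
  generalize PowerSeries.C (j : ℝ) = b at *
  linear_combination (A - a * PowerSeries.X * A + (δ + b * PowerSeries.X * A₁)) * h + hδ +
    2 * PowerSeries.X * A₁ * hδj

/-- The coefficients of `expConvolution j` are convolutions of the numbers `j! S(k+1, j+1)`. -/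
lemma factorial_mul_coeff_expConvolution (n j : ℕ) :
    ((n + 1).factorial : ℝ) * PowerSeries.coeff (n + 1) (expConvolution j) =
      PowerSeries.coeff n (PowerSeries.mk (factorialStirling · j) ^ 2) := by
  have hode (n : ℕ) := congrArg (PowerSeries.coeff n) (derivative_derivative_expConvolution j)
  simp only [map_add, map_sub, PowerSeries.coeff_C_mul, PowerSeries.coeff_derivative] at hode
  induction n using Nat.twoStepInduction generalizing j with
  | zero =>
    rw [sq_mk_factorialStirling]
    simp [coeff_one_expConvolution]
  | one =>
    have h := hode 0
    simp only [PowerSeries.coeff_zero_eq_constantCoeff_apply, constantCoeff_expConvolution,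
      zero_add, coeff_one_expConvolution] at h
    have hsq := congrArg (PowerSeries.coeff 0) (sq_mk_factorialStirling j)
    rw [sq_mk_factorialStirling]
    simp only [map_add, map_sub, PowerSeries.coeff_C_mul, PowerSeries.coeff_succ_X_mul,
      PowerSeries.coeff_zero_X_mul, PowerSeries.coeff_C] at hsq ⊢
    norm_num [Nat.factorial] at h hsq ⊢
    rw [hsq, mul_comm, h]
    split_ifs <;> simp
  | more n ih0 ih1 =>
    have h := hode (n + 1)
    have h0 := ih0 j hode
    have h1 := ih1 j hode
    have h0' := ih0 (j - 1) (by
      intro n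
      have h := congrArg (PowerSeries.coeff n) (derivative_derivative_expConvolution (j - 1))
      simpa only [map_add, map_sub, PowerSeries.coeff_C_mul, PowerSeries.coeff_derivative] using h)
    rw [sq_mk_factorialStirling]
    simp only [map_add, map_sub, PowerSeries.coeff_C_mul, PowerSeries.coeff_succ_X_mul,
      PowerSeries.coeff_C, Nat.succ_ne_zero, if_false]
    rw [← h0, ← h1, ← h0']
    simp only [Nat.factorial_succ] at h ⊢
    push_cast at h ⊢
    linear_combination ((n : ℝ) + 1) * n.factorial * h

lemma X_pow_dvd_expConvolution (j : ℕ) : PowerSeries.X ^ (j + 1) ∣ expConvolution j := by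
  rw [PowerSeries.X_pow_dvd_iff]
  intro m hm
  cases m with
  | zero => simpa using constantCoeff_expConvolution j
  | succ n =>
    have h := factorial_mul_coeff_expConvolution n j
    have h0 : PowerSeries.coeff n (PowerSeries.mk (factorialStirling · j) ^ 2) = 0 := by
      rw [sq, PowerSeries.coeff_mul]
      refine Finset.sum_eq_zero fun p hp => ?_
      have hp' : p.1 < j := by
        have := Finset.HasAntidiagonal.mem_antidiagonal.1 hp
        omega
      simp [factorialStirling_eq_zero hp']
    rw [h0] at h
    exact (mul_eq_zero.1 h).resolve_left (by positivity)

/-- Telescoped form of the differential equation for the partial sums of `expConvolution`. -/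
lemma partialSum_expConvolution_ode (N : ℕ) :
    2 * ((4 - PowerSeries.exp ℝ) *
        PowerSeries.derivative ℝ (∑ j ∈ Finset.range (N + 1), expConvolution j) -
      2 * ∑ j ∈ Finset.range (N + 1), expConvolution j - 3 * PowerSeries.exp ℝ) =
      ((N : ℝ⟦X⟧) + 1) *
        (expConvolution (N + 1) - 3 * (PowerSeries.exp ℝ - 1) * expConvolution N) := by
  induction N with
  | zero =>
    have h := expConvolution_raise 0
    simp only [zero_add, Finset.sum_range_one, expConvolution.eq_1, derivative_mul_eq,
      PowerSeries.derivative_exp, PowerSeries.derivative_X, Nat.cast_zero] at h ⊢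
    linear_combination -h
  | succ N ih =>
    have h := expConvolution_raise (N + 1)
    have hlower := expConvolution_lower N
    rw [Finset.sum_range_succ, map_add]
    push_cast at h ⊢
    linear_combination ih - h + 3 * hlower

/-- The exponential generating function of the antidiagonal sums of poly-Bernoulli numbers. -/
noncomputable def expConvolutionSum : ℝ⟦X⟧ :=
  PowerSeries.mk fun n => ∑ j ∈ Finset.range (n + 1), PowerSeries.coeff n (expConvolution j)

lemma X_pow_dvd_expConvolutionSum_sub (N : ℕ) :
    PowerSeries.X ^ N ∣ expConvolutionSum - ∑ j ∈ Finset.range N, expConvolution j := by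
  rw [PowerSeries.X_pow_dvd_iff]
  intro m hm
  rw [map_sub, map_sum, expConvolutionSum, PowerSeries.coeff_mk, sub_eq_zero]
  refine Finset.sum_subset (Finset.range_subset_range.2 hm) fun j _ hj => ?_
  refine PowerSeries.X_pow_dvd_iff.1 (X_pow_dvd_expConvolution j) m ?_
  simp only [Finset.mem_range] at hj
  omega

lemma expConvolutionSum_ode :
    (4 - PowerSeries.exp ℝ) * PowerSeries.derivative ℝ expConvolutionSum =
      2 * expConvolutionSum + 3 * PowerSeries.exp ℝ := by
  rw [← sub_eq_zero]
  refine mul_left_cancel₀ (two_ne_zero (α := ℝ⟦X⟧)) ?_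
  rw [mul_zero]
  ext N
  rw [map_zero]
  refine PowerSeries.X_pow_dvd_iff.1 (?_ : PowerSeries.X ^ (N + 1) ∣ _) N N.lt_succ_self
  obtain ⟨r, hr⟩ := X_pow_dvd_expConvolutionSum_sub (N + 1 + 1)
  obtain ⟨u, hu⟩ := X_pow_dvd_expConvolution (N + 1 + 1)
  obtain ⟨v, hv⟩ := X_pow_dvd_expConvolution (N + 1)
  have h := partialSum_expConvolution_ode (N + 1)
  rw [hu, hv] at h
  have hderiv := congrArg (PowerSeries.derivative ℝ) hr
  rw [map_sub, derivative_mul_eq, PowerSeries.derivative_pow, PowerSeries.derivative_X,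
    Nat.add_sub_cancel] at hderiv
  refine ⟨((N : ℝ⟦X⟧) + 2) *
      (PowerSeries.X ^ 2 * u - 3 * (PowerSeries.exp ℝ - 1) * PowerSeries.X * v) +
    2 * ((4 - PowerSeries.exp ℝ) *
        (((N : ℝ⟦X⟧) + 2) * r + PowerSeries.X * PowerSeries.derivative ℝ r) -
      2 * PowerSeries.X * r), ?_⟩
  push_cast at h hderiv
  linear_combination h + 2 * (4 - PowerSeries.exp ℝ) * hderiv - 4 * hr

/-- Lehmer's polynomials are the coefficients of the iterated derivatives of a solution of the
differential equation `2(1 - y) g' = g + 6y`, where `y` is a multiple of `eᵗ`. -/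
lemma pow_mul_iterate_derivative_eq_lehmer {g y : ℝ⟦X⟧}
    (hy : PowerSeries.derivative ℝ y = y)
    (hg : 2 * (1 - y) * PowerSeries.derivative ℝ g = g + 6 * y) (n : ℕ) :
    (2 * (1 - y)) ^ n * (PowerSeries.derivative ℝ)^[n] g =
      aeval y (lehmerQ n) * g + 6 * y * aeval y (lehmerP n) := by
  have h2 : PowerSeries.derivative ℝ (2 : ℝ⟦X⟧) = 0 := Derivation.map_natCast _ 2
  have h6 : PowerSeries.derivative ℝ (6 : ℝ⟦X⟧) = 0 := Derivation.map_natCast _ 6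
  induction n with
  | zero => simp [lehmerQ, lehmerP]
  | succ n ih =>
    have hpow : 2 * (1 - y) * PowerSeries.derivative ℝ ((2 * (1 - y)) ^ n) =
        -(2 * n * y * (2 * (1 - y)) ^ n) := by
      rw [PowerSeries.derivative_pow, derivative_mul_eq, h2, map_sub, hy,
        PowerSeries.derivative_one]
      cases n with
      | zero => simp
      | succ n =>
        rw [Nat.add_sub_cancel, pow_succ]
        ring
    have h := congrArg (PowerSeries.derivative ℝ) ih
    simp only [derivative_mul_eq, map_add, h6, hy, Derivation.map_aeval, smul_eq_mul] at h
    have hq : aeval y (lehmerQ (n + 1)) =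
        (2 * n * y + 1) * aeval y (lehmerQ n) +
          2 * y * (1 - y) * aeval y (Polynomial.derivative (lehmerQ n)) := by
      simp [lehmerQ, map_ofNat (PowerSeries.C (R := ℝ)) 2, map_ofNat (aeval (R := ℝ) y) 2]
    have hp : aeval y (lehmerP (n + 1)) =
        2 * ((n - 1) * y + 1) * aeval y (lehmerP n) +
          2 * y * (1 - y) * aeval y (Polynomial.derivative (lehmerP n)) +
          aeval y (lehmerQ n) := by
      simp [lehmerP, map_ofNat (PowerSeries.C (R := ℝ)) 2, map_ofNat (aeval (R := ℝ) y) 2]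
    rw [hq, hp, Function.iterate_succ_apply', pow_succ]
    linear_combination 2 * (1 - y) * h - (PowerSeries.derivative ℝ)^[n] g * hpow +
      2 * n * y * ih + aeval y (lehmerQ n) * hg

/-- If `B k n` are the poly-Bernoulli numbers `B_n^{(k)}`, characterized by the exponential
generating function `∑_{n≥0} B_n^{(k)} tⁿ/n! = ∑_{m≥1} (1-e^{-t})^{m-1}/m^k` (for `t` near `0`),
then for every `n ≥ 0`: `(2/3)ⁿ p_n(1/4) = ∑_{k=0}^n B_{n-k}^{(-k)}`. -/
theorem lehmer_poly_value_eq_sum_polyBernoulli (B : ℤ → ℕ → ℝ)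
    (hB : ∀ k : ℤ, ∃ ε > 0, ∀ t : ℝ, |t| < ε →
      HasSum (fun n : ℕ => B k n * t ^ n / (Nat.factorial n : ℝ))
        (∑' m : ℕ, (1 - Real.exp (-t)) ^ m / ((m : ℝ) + 1) ^ k))
    (n : ℕ) :
    (2 / 3 : ℝ) ^ n * (lehmerP (n + 1)).eval (1 / 4) =
      ∑ k ∈ Finset.range (n + 1), B (-(k : ℤ)) (n - k) := by
  have hsum : ∑ k ∈ Finset.range (n + 1), B (-(k : ℤ)) (n - k) =
      (n + 1).factorial * PowerSeries.coeff (n + 1) expConvolutionSum := by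
    rw [expConvolutionSum, PowerSeries.coeff_mk, Finset.mul_sum]
    simp only [factorial_mul_coeff_expConvolution, sq, PowerSeries.coeff_mul,
      PowerSeries.coeff_mk, Finset.Nat.sum_antidiagonal_eq_sum_range_succ_mk]
    rw [Finset.sum_comm]
    refine Finset.sum_congr rfl fun k hk => ?_
    rw [polyBernoulli_neg_eq_sum k _ (hB _)]
    refine Finset.sum_subset (Finset.range_subset_range.2 ?_) fun j _ hj => ?_
    · have := Finset.mem_range.1 hk
      omega
    · rw [factorialStirling_eq_zero (by simpa using hj), zero_mul]
  set y : ℝ⟦X⟧ := PowerSeries.C (1 / 4 : ℝ) * PowerSeries.exp ℝ with hydef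
  have hy : PowerSeries.derivative ℝ y = y := by
    rw [hydef, derivative_mul_eq, PowerSeries.derivative_C, PowerSeries.derivative_exp]
    ring
  have hy4 : 4 * y = PowerSeries.exp ℝ := by
    rw [hydef, ← mul_assoc, ← map_ofNat (PowerSeries.C (R := ℝ)) 4, ← map_mul]
    norm_num
  have hg : 2 * (1 - y) * PowerSeries.derivative ℝ expConvolutionSum =
      expConvolutionSum + 6 * y := by
    have h := expConvolutionSum_ode
    rw [← hy4] at h
    refine mul_left_cancel₀ (two_ne_zero (α := ℝ⟦X⟧)) ?_
    linear_combination h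
  have hg0 : PowerSeries.constantCoeff expConvolutionSum = 0 := by
    rw [← PowerSeries.coeff_zero_eq_constantCoeff_apply, expConvolutionSum,
      PowerSeries.coeff_mk]
    simp [constantCoeff_expConvolution]
  have hy0 : PowerSeries.constantCoeff y = 1 / 4 := by simp [hydef]
  have haeval : PowerSeries.constantCoeff (aeval y (lehmerP (n + 1))) =
      (lehmerP (n + 1)).eval (1 / 4) := by
    have hid : PowerSeries.constantCoeff.comp (algebraMap ℝ ℝ⟦X⟧) = RingHom.id ℝ :=
      RingHom.ext fun r => by simp
    rw [aeval_def, hom_eval₂, hy0, hid, eval₂_id]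
  have h := congrArg PowerSeries.constantCoeff
    (pow_mul_iterate_derivative_eq_lehmer hy hg (n + 1))
  simp only [map_mul, map_add, map_sub, map_pow, map_one, map_ofNat, hg0, hy0, haeval,
    PowerSeries.constantCoeff_iterate_derivative] at h
  rw [pow_succ] at h
  have hpow : (2 / 3 : ℝ) ^ n * (3 / 2) ^ n = 1 := by
    rw [← mul_pow]
    norm_num
  norm_num at h
  rw [hsum]
  linear_combination (-(2 / 3 : ℝ) ^ (n + 1)) * h +
    (n + 1).factorial * PowerSeries.coeff (n + 1) expConvolutionSum * hpow
end

section
/- For every real number a that is not an integer and every integer n ≥ 0: Σ_{m=0}^n (-1/2)_m·(1/2-a-n)_m / ((1-a-n)_m · m!) = (1/2)_n·(a-1/2)_n / ((a)_n · n!). -/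
/-- The shifted factorial (Pochhammer symbol) `(α)_n = α(α+1)⋯(α+n-1)`, `(α)_0 = 1`. -/
def poch (α : ℝ) : ℕ → ℝ
  | 0 => 1
  | n + 1 => poch α n * (α + n)

theorem poch_eq_prod (x : ℝ) (n : ℕ) : poch x n = ∏ k ∈ Finset.range n, (x + k) := by
  induction n with
  | zero => simp [poch]
  | succ n ih => rw [poch, ih, Finset.prod_range_succ]

theorem poch_succ_left (x : ℝ) (n : ℕ) : poch x (n + 1) = x * poch (x + 1) n := by
  rw [poch_eq_prod, poch_eq_prod, Finset.prod_range_succ', mul_comm]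
  congr 1
  · simp
  · refine Finset.prod_congr rfl fun k _ => ?_
    push_cast
    ring

theorem poch_reflect (x : ℝ) (n : ℕ) : poch (1 - x - n) n = (-1) ^ n * poch x n := by
  rw [poch_eq_prod, poch_eq_prod, ← Finset.prod_range_reflect]
  conv_rhs => rw [← Finset.card_range n, ← Finset.prod_const, Finset.card_range]
  rw [← Finset.prod_mul_distrib]
  refine Finset.prod_congr rfl fun k hk => ?_
  have hk' : k + 1 ≤ n := Finset.mem_range.mp hk
  rw [Nat.sub_sub, add_comm 1 k, Nat.cast_sub hk']
  push_cast
  ring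

theorem poch_ne_zero {x : ℝ} (hx : ∀ k : ℕ, x + k ≠ 0) (n : ℕ) : poch x n ≠ 0 := by
  rw [poch_eq_prod]
  exact Finset.prod_ne_zero_iff.mpr fun k _ => hx k

/-- Closed form of the partial sums of the hypergeometric series `₂F₁(A, B; A + B + 1; 1)`. -/
theorem sum_poch_div_poch (A B C : ℝ) (hC : C = A + B + 1) (hC0 : ∀ k : ℕ, C + k ≠ 0) (n : ℕ) :
    ∑ m ∈ Finset.range (n + 1), poch A m * poch B m / (poch C m * (Nat.factorial m : ℝ)) =
      poch (A + 1) n * poch (B + 1) n / (poch C n * (Nat.factorial n : ℝ)) := by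
  induction n with
  | zero => simp [poch]
  | succ n ih =>
    rw [Finset.sum_range_succ, ih, poch_succ_left A, poch_succ_left B, Nat.factorial_succ]
    simp only [poch]
    have hp := poch_ne_zero hC0 n
    have hCn := hC0 n
    have hf : (Nat.factorial n : ℝ) ≠ 0 := Nat.cast_ne_zero.mpr n.factorial_ne_zero
    have hn : (n : ℝ) + 1 ≠ 0 := n.cast_add_one_ne_zero
    push_cast
    field_simp
    rw [hC]
    ring

/-- For every non-integer real `a` and every integer `n ≥ 0`:
`∑_{m=0}^n (-1/2)_m (1/2-a-n)_m / ((1-a-n)_m m!) = (1/2)_n (a-1/2)_n / ((a)_n n!)`. -/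
theorem poch_sum_identity (a : ℝ) (ha : ∀ m : ℤ, a ≠ (m : ℝ)) (n : ℕ) :
    ∑ m ∈ Finset.range (n + 1),
        poch (-(1 / 2)) m * poch (1 / 2 - a - n) m /
          (poch (1 - a - n) m * (Nat.factorial m : ℝ)) =
      poch (1 / 2) n * poch (a - 1 / 2) n / (poch a n * (Nat.factorial n : ℝ)) := by
  have hC0 : ∀ k : ℕ, 1 - a - n + k ≠ 0 := fun k h =>
    ha (1 - n + k) (by push_cast; linarith)
  rw [sum_poch_div_poch _ _ _ (by ring) hC0, poch_reflect a,
    show (1 / 2 - a - n + 1 : ℝ) = 1 - (a - 1 / 2) - n by ring, poch_reflect,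
    show (-(1 / 2) + 1 : ℝ) = 1 / 2 by norm_num, mul_left_comm, mul_assoc ((-1) ^ n),
    mul_div_mul_left _ _ (pow_ne_zero n (by norm_num))]
end

section
/- For every integer n ≥ 0, every real number a not of the form (1-j)/2 with j a nonnegative integer, and every real z with |z| < 1: p_n(a,z) = 2^n · Σ_{j=0}^n Σ_{l=0}^j C(n+1, j+1)·C(j,l)·(a-1)^{j-l}·(1-z)^{j-l}·E_{n-j}(z,1/2)·E_l(z,1/2). -/
open Polynomial

/-- The polynomials `p_k(a,x)` for `k ≥ -1`, shifted so that `lehmerPa a n = p_{n-1}(a,·)`: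
`p_{-1}(a,x) = 0` and `p_{k+1}(a,x) = 2((k+1-a)x+a) p_k(a,x) + 2x(1-x) ∂ₓp_k(a,x) + q_k(x)`. -/
noncomputable def lehmerPa (a : ℝ) : ℕ → Polynomial ℝ
  | 0 => 0
  | n + 1 => C 2 * (C ((n : ℝ) - a) * X + C a) * lehmerPa a n
      + (2 * X * (1 - X)) * derivative (lehmerPa a n) + lehmerQ n

section GeneratingFunctions

open scoped PowerSeries

/-- The derivation `∂_t` of `R⟦X⟧`, linear over `ℝ` only. -/
noncomputable def seriesDerivation (R : Type*) [CommRing R] [Algebra ℝ R] :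
    Derivation ℝ R⟦X⟧ R⟦X⟧ :=
  (PowerSeries.derivative R).restrictScalars ℝ

theorem coeff_seriesDerivation {R : Type*} [CommRing R] [Algebra ℝ R] (f : R⟦X⟧) (n : ℕ) :
    PowerSeries.coeff n (seriesDerivation R f) = PowerSeries.coeff (n + 1) f * (n + 1) :=
  PowerSeries.coeff_derivative f n

theorem seriesDerivation_C {R : Type*} [CommRing R] [Algebra ℝ R] (r : R) :
    seriesDerivation R (PowerSeries.C r) = 0 :=
  PowerSeries.derivative_C

theorem seriesDerivation_X {R : Type*} [CommRing R] [Algebra ℝ R] :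
    seriesDerivation R PowerSeries.X = 1 :=
  PowerSeries.derivative_X

theorem seriesDerivation_ext {R : Type*} [CommRing R] [Algebra ℝ R] [IsAddTorsionFree R]
    {f g : R⟦X⟧} (h : seriesDerivation R f = seriesDerivation R g)
    (h0 : PowerSeries.constantCoeff f = PowerSeries.constantCoeff g) : f = g :=
  PowerSeries.derivative.ext h h0

/-- The derivation of `ℝ[X]⟦X⟧` that differentiates every coefficient. -/
noncomputable def coeffDerivation : Derivation ℝ ℝ[X]⟦X⟧ ℝ[X]⟦X⟧ :=
  Derivation.mk'
    { toFun := fun f => PowerSeries.mk fun n => derivative (PowerSeries.coeff n f)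
      map_add' := fun f g => by ext1 n; simp
      map_smul' := fun r f => by ext1 n; simp }
    (fun f g => by
      ext1 n
      simp only [LinearMap.coe_mk, AddHom.coe_mk, PowerSeries.coeff_mk, PowerSeries.coeff_mul,
        smul_eq_mul, map_add, derivative_sum, derivative_mul, Finset.sum_add_distrib]
      rw [add_comm]
      congr 1
      rw [← Finset.Nat.sum_antidiagonal_swap]
      exact Finset.sum_congr rfl fun p _ => mul_comm _ _)

theorem coeff_coeffDerivation (f : ℝ[X]⟦X⟧) (n : ℕ) :
    PowerSeries.coeff n (coeffDerivation f) = derivative (PowerSeries.coeff n f) := by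
  simp [coeffDerivation]

/-- The derivation `(1 - x t) ∂_t - x (1 - x) ∂_x`, where `t` is the variable of the power series
and `x` the variable of their coefficients. -/
noncomputable def eulerianDerivation : Derivation ℝ ℝ[X]⟦X⟧ ℝ[X]⟦X⟧ :=
  (1 - PowerSeries.C (X : ℝ[X]) * PowerSeries.X : ℝ[X]⟦X⟧) •
      seriesDerivation ℝ[X]
    - (PowerSeries.C (X * (1 - X) : ℝ[X])) • coeffDerivation

theorem eulerianDerivation_apply (f : ℝ[X]⟦X⟧) :
    eulerianDerivation f = (1 - PowerSeries.C (X : ℝ[X]) * PowerSeries.X) *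
      seriesDerivation ℝ[X] f - PowerSeries.C (X * (1 - X) : ℝ[X]) * coeffDerivation f := by
  simp [eulerianDerivation]

theorem coeff_eulerianDerivation (f : ℝ[X]⟦X⟧) (n : ℕ) :
    PowerSeries.coeff n (eulerianDerivation f) =
      ((n : ℝ[X]) + 1) * PowerSeries.coeff (n + 1) f - (n : ℝ[X]) * X * PowerSeries.coeff n f
        - X * (1 - X) * derivative (PowerSeries.coeff n f) := by
  rw [eulerianDerivation_apply, sub_mul, one_mul, mul_assoc, map_sub, map_sub,
    PowerSeries.coeff_C_mul, PowerSeries.coeff_C_mul, coeff_coeffDerivation,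
    coeff_seriesDerivation]
  cases n with
  | zero => simp
  | succ n =>
    rw [PowerSeries.coeff_succ_X_mul, coeff_seriesDerivation]
    push_cast
    ring

theorem eq_of_eulerianDerivation_eq {f g r : ℝ[X]⟦X⟧} {c : ℝ[X]}
    (hf : eulerianDerivation f = PowerSeries.C c * f + r)
    (hg : eulerianDerivation g = PowerSeries.C c * g + r)
    (h0 : PowerSeries.coeff 0 f = PowerSeries.coeff 0 g) : f = g := by
  ext1 n
  induction n with
  | zero => exact h0
  | succ n ih =>
    have hfn := congrArg (PowerSeries.coeff n) hf
    have hgn := congrArg (PowerSeries.coeff n) hg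
    rw [coeff_eulerianDerivation, map_add, PowerSeries.coeff_C_mul] at hfn hgn
    rw [ih] at hfn
    have hn : ((n : ℝ[X]) + 1) ≠ 0 := by exact_mod_cast n.succ_ne_zero
    refine mul_left_cancel₀ hn ?_
    linear_combination hfn - hgn

/-- The power series `exp (c t)` for a polynomial `c`. -/
noncomputable def expSeries (c : ℝ[X]) : ℝ[X]⟦X⟧ :=
  PowerSeries.mk fun n => C ((n.factorial : ℝ)⁻¹) * c ^ n

theorem C_inv_factorial_succ_mul (n : ℕ) :
    C (((n + 1).factorial : ℝ)⁻¹) * ((n : ℝ[X]) + 1) = C ((n.factorial : ℝ)⁻¹) := by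
  rw [← C_eq_natCast, ← C_1, ← C_add, ← C_mul, Nat.factorial_succ]
  congr 1
  push_cast
  field_simp

theorem seriesDerivation_expSeries (c : ℝ[X]) :
    seriesDerivation ℝ[X] (expSeries c) = PowerSeries.C c * expSeries c := by
  ext1 n
  rw [coeff_seriesDerivation, PowerSeries.coeff_C_mul, expSeries, PowerSeries.coeff_mk,
    PowerSeries.coeff_mk, ← C_inv_factorial_succ_mul n]
  ring

theorem coeffDerivation_expSeries (c : ℝ[X]) :
    coeffDerivation (expSeries c) =
      PowerSeries.X * PowerSeries.C (derivative c) * expSeries c := by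
  ext1 n
  rw [coeff_coeffDerivation, mul_assoc]
  cases n with
  | zero => simp [expSeries]
  | succ n =>
    rw [PowerSeries.coeff_succ_X_mul, PowerSeries.coeff_C_mul, expSeries, PowerSeries.coeff_mk,
      PowerSeries.coeff_mk, ← C_inv_factorial_succ_mul n, derivative_C_mul,
      derivative_pow_succ]
    simp
    ring

theorem coeffDerivation_C (c : ℝ[X]) :
    coeffDerivation (PowerSeries.C c) = PowerSeries.C (derivative c) := by
  ext1 n
  rw [coeff_coeffDerivation, PowerSeries.coeff_C, PowerSeries.coeff_C]
  split_ifs <;> simp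

theorem eulerianDerivation_C (c : ℝ[X]) :
    eulerianDerivation (PowerSeries.C c) = - PowerSeries.C (X * (1 - X) * derivative c) := by
  rw [eulerianDerivation_apply, coeffDerivation_C, seriesDerivation_C, map_mul _ _ (derivative c)]
  ring

theorem eulerianDerivation_expSeries (c : ℝ[X]) :
    eulerianDerivation (expSeries c) = ((1 - PowerSeries.C (X : ℝ[X]) * PowerSeries.X) *
      PowerSeries.C c - PowerSeries.X * PowerSeries.C (X * (1 - X) * derivative c)) *
        expSeries c := by
  rw [eulerianDerivation_apply, coeffDerivation_expSeries, seriesDerivation_expSeries,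
    map_mul _ _ (derivative c)]
  ring

/-- The exponential generating function of `q_{n-1}(x) / 2 ^ n`. -/
noncomputable def lehmerQSeries : ℝ[X]⟦X⟧ :=
  PowerSeries.mk fun n => C ((2 ^ n * n.factorial : ℝ)⁻¹) * lehmerQ n

/-- The exponential generating function of `2 p_{n-1}(a,x) / 2 ^ n`. -/
noncomputable def lehmerPaSeries (a : ℝ) : ℝ[X]⟦X⟧ :=
  PowerSeries.mk fun n => C (2 * (2 ^ n * n.factorial : ℝ)⁻¹) * lehmerPa a n

theorem add_one_mul_C_inv_factorial (n : ℕ) :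
    ((n : ℝ[X]) + 1) * C ((2 ^ (n + 1) * (n + 1).factorial : ℝ)⁻¹) =
      C (1 / 2) * C ((2 ^ n * n.factorial : ℝ)⁻¹) := by
  rw [← C_eq_natCast, ← C_1, ← C_add, ← C_mul, ← C_mul, Nat.factorial_succ]
  congr 1
  push_cast
  rw [pow_succ]
  field_simp

theorem C_half_mul_two : C (1 / 2 : ℝ) * 2 = 1 := by
  rw [← C_ofNat, ← C_mul]
  norm_num

theorem C_C_half_mul_two : PowerSeries.C (C (1 / 2 : ℝ)) * 2 = 1 := by
  rw [← map_ofNat PowerSeries.C, ← map_mul, C_half_mul_two, map_one]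

theorem eulerianDerivation_lehmerQSeries :
    eulerianDerivation lehmerQSeries = PowerSeries.C (C (1 / 2)) * lehmerQSeries := by
  ext1 n
  rw [coeff_eulerianDerivation, PowerSeries.coeff_C_mul, lehmerQSeries, PowerSeries.coeff_mk,
    PowerSeries.coeff_mk, ← mul_assoc, add_one_mul_C_inv_factorial, lehmerQ, derivative_C_mul,
    C_mul, C_eq_natCast, C_ofNat]
  linear_combination (C ((2 ^ n * n.factorial : ℝ)⁻¹) *
    (n * X * lehmerQ n + X * (1 - X) * derivative (lehmerQ n))) * C_half_mul_two

theorem eulerianDerivation_lehmerPaSeries (a : ℝ) :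
    eulerianDerivation (lehmerPaSeries a) =
      PowerSeries.C (C a * (1 - X)) * lehmerPaSeries a + lehmerQSeries := by
  ext1 n
  rw [coeff_eulerianDerivation, map_add, PowerSeries.coeff_C_mul, lehmerPaSeries, lehmerQSeries,
    PowerSeries.coeff_mk, PowerSeries.coeff_mk, PowerSeries.coeff_mk, C_mul, C_mul, ← mul_assoc,
    mul_left_comm, add_one_mul_C_inv_factorial, lehmerPa, derivative_mul, derivative_mul,
    derivative_C, derivative_C, C_sub, C_eq_natCast, C_ofNat]
  linear_combination (C ((2 ^ n * n.factorial : ℝ)⁻¹) *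
    (2 * ((n - C a) * X + C a) * lehmerPa a n + 2 * X * (1 - X) * derivative (lehmerPa a n)
      + lehmerQ n)) * C_half_mul_two

/-- `lehmerQSeries` is a square root of `(1 - x) / (exp (t (x - 1)) - x)`. -/
theorem lehmerQSeries_sq_mul :
    lehmerQSeries ^ 2 * (expSeries (X - 1) - PowerSeries.C X) = PowerSeries.C (1 - X) := by
  refine eq_of_eulerianDerivation_eq (c := X) (r := 0) ?_ ?_ ?_
  · rw [pow_two, Derivation.leibniz, Derivation.leibniz, map_sub, eulerianDerivation_C,
      eulerianDerivation_expSeries, eulerianDerivation_lehmerQSeries]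
    simp only [smul_eq_mul, derivative_X, derivative_one, map_mul, map_sub,
      map_one, map_zero]
    linear_combination (lehmerQSeries ^ 2 * (expSeries (X - 1) - PowerSeries.C X)) * C_C_half_mul_two
  · rw [eulerianDerivation_C]
    simp only [derivative_X, derivative_one, map_mul, map_sub,
      map_one, map_zero]
    ring
  · simp [lehmerQSeries, expSeries, lehmerQ, pow_two]

/-- The power series `∫₀ᵗ exp ((a - 1) (1 - x) s) Q(x, s) ds`, with `Q` the series
`lehmerQSeries`. -/
noncomputable def lehmerIntegral (a : ℝ) : ℝ[X]⟦X⟧ :=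
  PowerSeries.mk fun n => C ((n : ℝ)⁻¹) *
    PowerSeries.coeff (n - 1) (expSeries (C (a - 1) * (1 - X)) * lehmerQSeries)

theorem coeff_zero_lehmerIntegral (a : ℝ) : PowerSeries.coeff 0 (lehmerIntegral a) = 0 := by
  simp [lehmerIntegral]

theorem seriesDerivation_lehmerIntegral (a : ℝ) :
    seriesDerivation ℝ[X] (lehmerIntegral a) =
      expSeries (C (a - 1) * (1 - X)) * lehmerQSeries := by
  ext1 n
  have h : C (((n + 1 : ℕ) : ℝ)⁻¹) * ((n : ℝ[X]) + 1) = 1 := by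
    rw [← C_eq_natCast, ← C_1, ← C_add, ← C_mul]
    congr 1
    push_cast
    field_simp
  rw [coeff_seriesDerivation, lehmerIntegral, PowerSeries.coeff_mk, Nat.add_sub_cancel]
  linear_combination (PowerSeries.coeff n
    (expSeries (C (a - 1) * (1 - X)) * lehmerQSeries)) * h

theorem seriesDerivation_coeffDerivation (f : ℝ[X]⟦X⟧) :
    seriesDerivation ℝ[X] (coeffDerivation f) =
      coeffDerivation (seriesDerivation ℝ[X] f) := by
  ext1 n
  simp [coeff_seriesDerivation, coeff_coeffDerivation]

theorem seriesDerivation_eulerianDerivation (f : ℝ[X]⟦X⟧) :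
    seriesDerivation ℝ[X] (eulerianDerivation f) =
      eulerianDerivation (seriesDerivation ℝ[X] f) -
        PowerSeries.C X * seriesDerivation ℝ[X] f := by
  rw [eulerianDerivation_apply, eulerianDerivation_apply, map_sub, Derivation.leibniz,
    Derivation.leibniz, map_sub, Derivation.leibniz, seriesDerivation_coeffDerivation,
    seriesDerivation_C, seriesDerivation_C, seriesDerivation_X,
    Derivation.map_one_eq_zero]
  simp only [smul_eq_mul]
  ring

theorem eulerianDerivation_lehmerIntegral (a : ℝ) :
    eulerianDerivation (lehmerIntegral a) =
      1 + PowerSeries.C (C (1 / 2) - X + C (a - 1) * (1 - X)) * lehmerIntegral a := by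
  apply seriesDerivation_ext
  · rw [seriesDerivation_eulerianDerivation, map_add, Derivation.leibniz,
      seriesDerivation_lehmerIntegral, Derivation.leibniz, eulerianDerivation_lehmerQSeries,
      eulerianDerivation_expSeries,
      seriesDerivation_C, Derivation.map_one_eq_zero]
    simp only [smul_eq_mul, derivative_mul, derivative_C, derivative_X,
      derivative_one, map_mul, map_sub, map_add, map_one, map_zero]
    ring
  · rw [← PowerSeries.coeff_zero_eq_constantCoeff_apply,
      ← PowerSeries.coeff_zero_eq_constantCoeff_apply, coeff_eulerianDerivation, map_add,
      PowerSeries.coeff_C_mul, coeff_zero_lehmerIntegral]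
    simp [lehmerIntegral, expSeries, lehmerQSeries, lehmerQ]

theorem lehmerPaSeries_eq (a : ℝ) : lehmerPaSeries a = lehmerQSeries * lehmerIntegral a := by
  refine eq_of_eulerianDerivation_eq (eulerianDerivation_lehmerPaSeries a) ?_ ?_
  · rw [Derivation.leibniz, eulerianDerivation_lehmerQSeries, eulerianDerivation_lehmerIntegral]
    simp only [smul_eq_mul, map_mul, map_sub, map_add, map_one]
    linear_combination (lehmerQSeries * lehmerIntegral a) * C_C_half_mul_two
  · simp [lehmerPaSeries, lehmerPa, lehmerIntegral]

theorem hasSum_coeff_mul {f g : ℝ⟦X⟧} {t u v : ℝ}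
    (hf : HasSum (fun n => PowerSeries.coeff n f * t ^ n) u)
    (hg : HasSum (fun n => PowerSeries.coeff n g * t ^ n) v) :
    HasSum (fun n => PowerSeries.coeff n (f * g) * t ^ n) (u * v) := by
  have hf' := hf.summable.norm
  have hg' := hg.summable.norm
  have hterm : (fun n => PowerSeries.coeff n (f * g) * t ^ n) = fun n =>
      ∑ p ∈ Finset.HasAntidiagonal.antidiagonal n,
        PowerSeries.coeff p.1 f * t ^ p.1 * (PowerSeries.coeff p.2 g * t ^ p.2) := by
    ext n
    rw [PowerSeries.coeff_mul, Finset.sum_mul]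
    refine Finset.sum_congr rfl fun p hp => ?_
    rw [← Finset.HasAntidiagonal.mem_antidiagonal.mp hp, pow_add]
    ring
  rw [hterm, ← hf.tsum_eq, ← hg.tsum_eq,
    tsum_mul_tsum_eq_tsum_sum_antidiagonal_of_summable_norm hf' hg']
  exact (summable_norm_sum_mul_antidiagonal_of_summable_norm hf' hg').of_norm.hasSum

theorem eq_of_hasSum_coeff {f g : ℝ⟦X⟧} {F : ℝ → ℝ}
    (hf : ∀ᶠ t in nhds 0, HasSum (fun n => PowerSeries.coeff n f * t ^ n) (F t))
    (hg : ∀ᶠ t in nhds 0, HasSum (fun n => PowerSeries.coeff n g * t ^ n) (F t)) : f = g := by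
  have key : ∀ h : ℝ⟦X⟧,
      (∀ᶠ t in nhds 0, HasSum (fun n => PowerSeries.coeff n h * t ^ n) (F t)) →
      HasFPowerSeriesAt F
        (FormalMultilinearSeries.ofScalars ℝ fun n => PowerSeries.coeff n h) 0 := by
    intro h hh
    rw [hasFPowerSeriesAt_iff]
    filter_upwards [hh] with t ht
    simpa [FormalMultilinearSeries.coeff_ofScalars, mul_comm] using ht
  have heq := (key f hf).eq_formalMultilinearSeries (key g hg)
  ext n
  simpa [FormalMultilinearSeries.coeff_ofScalars] using
    congrArg (fun p => FormalMultilinearSeries.coeff p n) heq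

theorem hasSum_coeff_C (c t : ℝ) :
    HasSum (fun n => PowerSeries.coeff n (PowerSeries.C c) * t ^ n) c := by
  convert hasSum_ite_eq 0 c using 2 with n
  rw [PowerSeries.coeff_C]
  split_ifs with h <;> simp [h]

theorem hasSum_coeff_map_expSeries (z t : ℝ) (c : ℝ[X]) :
    HasSum (fun n => PowerSeries.coeff n (PowerSeries.map (evalRingHom z) (expSeries c)) * t ^ n)
      (Real.exp (t * c.eval z)) := by
  have h := NormedSpace.expSeries_div_hasSum_exp (t * c.eval z)
  rw [← Real.exp_eq_exp_ℝ] at h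
  refine (congrArg (HasSum · _) (funext fun n => ?_)).mp h
  rw [PowerSeries.coeff_map, expSeries, PowerSeries.coeff_mk, coe_evalRingHom, eval_mul, eval_C,
    eval_pow, mul_pow]
  ring

/-- The power series expansion of `((1 - z) / (exp (t (z - 1)) - z)) ^ (1 / 2)` is the
specialization of `lehmerQSeries` at `x = z`. -/
theorem mk_eq_map_lehmerQSeries {e : ℕ → ℝ} {z : ℝ} (hz : z < 1)
    (he : ∀ᶠ t in nhds 0, HasSum (fun n => e n * t ^ n)
      (((1 - z) / (Real.exp (t * (z - 1)) - z)) ^ (1 / 2 : ℝ))) :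
    PowerSeries.mk e = PowerSeries.map (evalRingHom z) lehmerQSeries := by
  have hz' : 0 < 1 - z := sub_pos.mpr hz
  set r := PowerSeries.map (evalRingHom z) lehmerQSeries with hr
  set w := PowerSeries.map (evalRingHom z) (expSeries (X - 1)) - PowerSeries.C z with hw
  have hrw : r ^ 2 * w = PowerSeries.C (1 - z) := by
    have h := congrArg (PowerSeries.map (evalRingHom z)) lehmerQSeries_sq_mul
    rw [map_mul, map_pow, map_sub, PowerSeries.map_C, PowerSeries.map_C] at h
    simpa using h
  have hpos : ∀ᶠ t in nhds (0 : ℝ), 0 < Real.exp (t * (z - 1)) - z := by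
    have hc : Continuous fun t : ℝ => Real.exp (t * (z - 1)) - z := by fun_prop
    exact hc.continuousAt.eventually_const_lt (by simpa using hz)
  have hew : PowerSeries.mk e ^ 2 * w = PowerSeries.C (1 - z) := by
    refine eq_of_hasSum_coeff (F := fun _ => 1 - z) ?_
      (Filter.Eventually.of_forall fun t => hasSum_coeff_C _ _)
    filter_upwards [he, hpos] with t ht hpt
    have hs : HasSum (fun n => PowerSeries.coeff n (PowerSeries.mk e) * t ^ n)
        (((1 - z) / (Real.exp (t * (z - 1)) - z)) ^ (1 / 2 : ℝ)) := by
      simpa using ht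
    have hws : HasSum (fun n => PowerSeries.coeff n w * t ^ n) (Real.exp (t * (z - 1)) - z) := by
      have h := (hasSum_coeff_map_expSeries z t (X - 1)).sub (hasSum_coeff_C z t)
      simpa [hw, sub_mul] using h
    have hprod := hasSum_coeff_mul (hasSum_coeff_mul hs hs) hws
    rw [← Real.rpow_add (div_pos hz' hpt), ← pow_two] at hprod
    norm_num at hprod
    rwa [div_mul_cancel₀ _ hpt.ne'] at hprod
  have hw0 : w ≠ 0 := by
    intro h
    rw [h, mul_zero] at hrw
    have := congrArg (PowerSeries.coeff 0) hrw
    simp at this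
    linarith
  have hsq : PowerSeries.mk e ^ 2 = r ^ 2 := mul_right_cancel₀ hw0 (hew.trans hrw.symm)
  rcases sq_eq_sq_iff_eq_or_eq_neg.mp hsq with h | h
  · exact h
  · exfalso
    have he0 : e 0 = 1 := by
      have h0 := he.self_of_nhds
      rw [zero_mul, Real.exp_zero, div_self hz'.ne', Real.one_rpow] at h0
      refine HasSum.unique ?_ h0
      convert hasSum_ite_eq 0 (e 0) using 2 with n
      split_ifs with hn <;> simp [hn]
    have h0 := congrArg (PowerSeries.coeff 0) h
    rw [PowerSeries.coeff_mk, he0, map_neg, hr, PowerSeries.coeff_map, lehmerQSeries,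
      PowerSeries.coeff_mk, lehmerQ] at h0
    norm_num at h0

theorem eval_lehmerPa_succ {e : ℕ → ℝ} {z : ℝ}
    (he : PowerSeries.mk (fun n => e n / n.factorial) =
      PowerSeries.map (evalRingHom z) lehmerQSeries) (n : ℕ) (a : ℝ) :
    (lehmerPa a (n + 1)).eval z =
      2 ^ n * ∑ j ∈ Finset.range (n + 1), ∑ l ∈ Finset.range (j + 1),
        (Nat.choose (n + 1) (j + 1) : ℝ) * (Nat.choose j l : ℝ) * (a - 1) ^ (j - l) *
          (1 - z) ^ (j - l) * e (n - j) * e l := by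
  have hq : ∀ k, (PowerSeries.coeff k lehmerQSeries).eval z = e k / k.factorial := by
    intro k
    have h := congrArg (PowerSeries.coeff k) he
    rw [PowerSeries.coeff_mk, PowerSeries.coeff_map] at h
    exact h.symm
  have hi : ∀ j, (PowerSeries.coeff (j + 1) (lehmerIntegral a)).eval z =
      ((j : ℝ) + 1)⁻¹ * ∑ l ∈ Finset.range (j + 1), e l / l.factorial *
        (((j - l).factorial : ℝ)⁻¹ * ((a - 1) * (1 - z)) ^ (j - l)) := by
    intro j
    rw [lehmerIntegral, PowerSeries.coeff_mk, Nat.add_sub_cancel, eval_mul, eval_C,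
      mul_comm (expSeries _), PowerSeries.coeff_mul,
      Finset.Nat.sum_antidiagonal_eq_sum_range_succ_mk, eval_finsetSum]
    simp [hq, expSeries]
  have h := congrArg (fun f => (PowerSeries.coeff (n + 1) f).eval z) (lehmerPaSeries_eq a)
  simp only [lehmerPaSeries, PowerSeries.coeff_mk, eval_mul, eval_C] at h
  rw [mul_comm lehmerQSeries, PowerSeries.coeff_mul,
    Finset.Nat.sum_antidiagonal_eq_sum_range_succ_mk, eval_finsetSum, Finset.sum_range_succ'] at h
  simp only [eval_mul, hq, hi, coeff_zero_lehmerIntegral, eval_zero, zero_mul, add_zero,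
    Nat.add_sub_add_right] at h
  have hfac : ((n + 1).factorial : ℝ) ≠ 0 := by positivity
  have hpa : (lehmerPa a (n + 1)).eval z = 2 ^ n * ((n + 1).factorial *
      (2 * (2 ^ (n + 1) * ((n + 1).factorial : ℝ))⁻¹ * (lehmerPa a (n + 1)).eval z)) := by
    rw [pow_succ]
    field_simp
  rw [hpa, h, Finset.mul_sum]
  congr 1
  refine Finset.sum_congr rfl fun j hj => ?_
  rw [mul_assoc, Finset.sum_mul, ← mul_assoc, Finset.mul_sum]
  refine Finset.sum_congr rfl fun l hl => ?_
  have hj' : j ≤ n := Nat.lt_succ_iff.mp (Finset.mem_range.mp hj)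
  have hl' : l ≤ j := Nat.lt_succ_iff.mp (Finset.mem_range.mp hl)
  rw [Nat.cast_choose ℝ (Nat.add_le_add_right hj' 1), Nat.cast_choose ℝ hl', Nat.add_sub_add_right,
    Nat.factorial_succ j, mul_pow]
  push_cast
  field_simp

end GeneratingFunctions

/-- If `E n x y` is the family of bivariate Eulerian polynomials, characterized by the
exponential generating function `∑_{n≥0} E_n(x,y) tⁿ/n! = ((1-x)/(e^{t(x-1)} - x))^y`
(for `t` near `0`), then for every integer `n ≥ 0`, every real `a` not of the form `(1-j)/2`
with `j` a nonnegative integer, and every real `z` with `|z| < 1`: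
`p_n(a,z) = 2ⁿ ∑_{j=0}^n ∑_{l=0}^j C(n+1,j+1) C(j,l) (a-1)^{j-l} (1-z)^{j-l}
  E_{n-j}(z,1/2) E_l(z,1/2)`. -/
theorem pa_eq_eulerian (E : ℕ → ℝ → ℝ → ℝ)
    (hE : ∀ x y : ℝ, x ≠ 1 → ∃ ε > 0, ∀ t : ℝ, |t| < ε →
      HasSum (fun n : ℕ => E n x y * t ^ n / (Nat.factorial n : ℝ))
        (((1 - x) / (Real.exp (t * (x - 1)) - x)) ^ y))
    (n : ℕ) (a : ℝ) (ha : ∀ j : ℕ, a ≠ (1 - (j : ℝ)) / 2) (z : ℝ) (hz : |z| < 1) :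
    (lehmerPa a (n + 1)).eval z =
      2 ^ n * ∑ j ∈ Finset.range (n + 1), ∑ l ∈ Finset.range (j + 1),
        (Nat.choose (n + 1) (j + 1) : ℝ) * (Nat.choose j l : ℝ) * (a - 1) ^ (j - l) *
          (1 - z) ^ (j - l) * E (n - j) z (1 / 2) * E l z (1 / 2) := by
  have hz1 : z < 1 := (abs_lt.mp hz).2
  refine eval_lehmerPa_succ (e := fun k => E k z (1 / 2)) (mk_eq_map_lehmerQSeries hz1 ?_) n a
  obtain ⟨ε, hε, h⟩ := hE z (1 / 2) hz1.ne
  filter_upwards [Metric.ball_mem_nhds (0 : ℝ) hε] with t ht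
  have hs := h t (by simpa using ht)
  simpa only [div_mul_eq_mul_div] using hs
end
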